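/- The monoid Γ₊ has left and right cancellation: for every u ∈ [1,γ] \ {1} and all A, B ∈ Γ₊, if ⟨u⟩·A = ⟨u⟩·B then A = B, and if A·⟨u⟩ = B·⟨u⟩ then A = B. -/

import Mathlib

/-!
Let `V` be the geometric representation of `W`, with its root system `Φ`. The Coxeter element
`γ = s₁ ⋯ sₙ` (up to conjugation) determines a positive definite, non-symmetric form `E` on `V`
(`seifert`), triangular on the simple roots and with twice the Tits form as its symmetrisation.
Products of reflections over lists of roots that are triangular for `E` depend only on the span of
the list (`prodR_congr`) and are shortest factorisations (`sp_eq_of_prodR_eq`).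

A *good* list is a triangular list of roots that is a simple system for the roots in its span.
Rotating a good list (moving its first member `a` to the end as `-a` and reflecting the other
members in `a`) does not change the product of the reflections. Since the Coxeter transformation
of a good list has finite order and no nonzero fixed vector in its span, every root of the span
becomes the first member of some rotation. Removing it there shows that any reflection in a root of
the span can be split off from the product, leaving the product of a good list (`Good.coatom`).
It follows that the elements of `[1,γ]` correspond to good lists, and that the order on `[1,γ]` is
inclusion of spans. Two such spans have a triangular basis of roots for the span of their common
roots: for a vector `x` in both cones, one rotates until the first member `a` satisfies
`E a x > 0`, which forces `a` to be common to both lists, and one removes `a` (`Good.exists_tri`,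
`Good.meet`). So any two elements of `[1,γ]` have a meet (`exists_meet`). Everything is uniform in
the type of `W`; the input from the representation is `exists_good`.

Given meets, cancellation follows by a normal form argument. The generator `⟨s⟩` acts on pairs
`(a, X)` with `a ∈ [1,γ]` and `X ∈ Γ₊` by `(a, X) ↦ (s h, ⟨h⁻¹a⟩X)`, where `h = a ∧ s⁻¹γ`. This
respects the defining relations (`act_mul`), and `(a, X) ↦ ⟨a⟩X` intertwines it with left
multiplication, so that an element of `Γ₊` is recovered from its action on `(1, 1)`; comparing the
actions of `⟨s⟩A` and `⟨s⟩C` gives `A = C` (`left_cancel`). Right cancellation is left cancellation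
for `γ⁻¹`, by inversion in `W`.
-/

variable {B : Type*} {W : Type*} [Group W] {M : CoxeterMatrix B}

/-- The reflection length of `w`: the least `k` such that `w` is a product of `k`
reflections (conjugates of simple reflections). -/
noncomputable def rlen (cs : CoxeterSystem M W) (w : W) : ℕ :=
  sInf {k | ∃ l : List W, (∀ t ∈ l, cs.IsReflection t) ∧ l.length = k ∧ l.prod = w}

/-- The reflection (absolute) order on `W`: `u ≤ w` iff `ℓ(w) = ℓ(u) + ℓ(u⁻¹w)`. -/
def rle (cs : CoxeterSystem M W) (u w : W) : Prop :=
  rlen cs w = rlen cs u + rlen cs (u⁻¹ * w)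

/-- A Coxeter element: a conjugate of a product of all the simple reflections,
each occurring exactly once, in some order. -/
def IsCoxeterElement [Fintype B] (cs : CoxeterSystem M W) (γ : W) : Prop :=
  ∃ (v : W) (l : List B), l.Nodup ∧ (∀ i : B, i ∈ l) ∧ γ = v * cs.wordProd l * v⁻¹

/-- The generating set of the poset group/monoid: the interval `[1,γ]` minus the identity. -/
abbrev NCGen (cs : CoxeterSystem M W) (γ : W) : Type _ :=
  {w : W // w ≠ 1 ∧ rle cs w γ}

/-- The defining relations of the positive monoid `Γ₊(W,γ)`:
`⟨w₁⟩⟨w₂⟩ = ⟨w₃⟩` whenever `w₁w₂ = w₃` in `W` and `ℓ(w₁) + ℓ(w₂) = ℓ(w₃)`. -/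
def posRels (cs : CoxeterSystem M W) (γ : W) :
    FreeMonoid (NCGen cs γ) → FreeMonoid (NCGen cs γ) → Prop :=
  fun x y => ∃ w₁ w₂ w₃ : NCGen cs γ,
    x = FreeMonoid.of w₁ * FreeMonoid.of w₂ ∧ y = FreeMonoid.of w₃ ∧
    (w₁ : W) * (w₂ : W) = (w₃ : W) ∧
    rlen cs (w₁ : W) + rlen cs (w₂ : W) = rlen cs (w₃ : W)

/-- The positive monoid `Γ₊(W,γ)`, presented by the generators `⟨w⟩`, `w ∈ [1,γ] \ {1}`,
and the relations `posRels`. -/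
abbrev PosMonoid (cs : CoxeterSystem M W) (γ : W) := PresentedMonoid (posRels cs γ)

open Classical in
/-- The generator `⟨w⟩` of `Γ₊(W,γ)` for `w ∈ [1,γ]`, interpreting `⟨1⟩` as the
identity of the monoid (and defaulting to the identity off the interval). -/
noncomputable def pgen (cs : CoxeterSystem M W) (γ : W) (w : W) : PosMonoid cs γ :=
  if h : w ≠ 1 ∧ rle cs w γ then PresentedMonoid.of (posRels cs γ) ⟨w, h⟩ else 1

namespace DualBraid

section Form

variable {V : Type*} [AddCommGroup V] [Module ℝ V]

/-! ### Reflections, cones and triangular lists for a positive definite form -/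

/-- The orthogonal reflection in `a` for the symmetrisation `E x y + E y x` of `E`
(meaningful when `E a a = 1`). -/
def refl (E : V →ₗ[ℝ] V →ₗ[ℝ] ℝ) (a : V) : Module.End ℝ V :=
  LinearMap.id - (E a + E.flip a).smulRight a

theorem refl_apply (E : V →ₗ[ℝ] V →ₗ[ℝ] ℝ) (a x : V) :
    refl E a x = x - (E a x + E x a) • a := by
  simp [refl]

/-- The convex cone generated by the members of a list. -/
inductive Cone (l : List V) : V → Prop
  | zero : Cone l 0
  | cons (c : ℝ) (hc : 0 ≤ c) {a : V} (ha : a ∈ l) {x : V} (hx : Cone l x) : Cone l (c • a + x)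

/-- The linear span of the members of a list. -/
def sp (l : List V) : Submodule ℝ V := Submodule.span ℝ {x | x ∈ l}

/-- A list `θ₁, …, θₘ` is triangular when `E θⱼ θᵢ = 0` for `i < j`. -/
def Tri (E : V →ₗ[ℝ] V →ₗ[ℝ] ℝ) (l : List V) : Prop := l.Pairwise (fun x y => E y x = 0)

/-- The product, in order, of the reflections in the members of a list. -/
def prodR (E : V →ₗ[ℝ] V →ₗ[ℝ] ℝ) (l : List V) : Module.End ℝ V := (l.map (refl E)).prod

/-- `Φ` is a finite set of roots for the symmetrisation of the positive definite (usually not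
symmetric) form `E`: unit vectors permuted by the reflections in them, these reflections
generating only elements of finite order. -/
structure Roots (E : V →ₗ[ℝ] V →ₗ[ℝ] ℝ) (Φ : Set V) : Prop where
  pos : ∀ x, x ≠ 0 → 0 < E x x
  finite : Φ.Finite
  one : ∀ a ∈ Φ, E a a = 1
  refl_mem : ∀ a ∈ Φ, ∀ b ∈ Φ, refl E a b ∈ Φ
  order : ∀ l : List V, (∀ a ∈ l, a ∈ Φ) → ∃ N, 0 < N ∧ prodR E l ^ N = 1

/-- A good list is a triangular list of roots which is a simple system for the roots in its
span. Its product of reflections is then a Coxeter element of the parabolic subgroup attached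
to that span. -/
structure Good (E : V →ₗ[ℝ] V →ₗ[ℝ] ℝ) (Φ : Set V) (l : List V) : Prop where
  mem : ∀ a ∈ l, a ∈ Φ
  tri : Tri E l
  sign : ∀ φ ∈ Φ, φ ∈ sp l → Cone l φ ∨ Cone l (-φ)

/-- `l₁` spans a subspace of the span of `l`, and the roots there which are positive for `l`
are positive for `l₁`. -/
structure Compat (Φ : Set V) (l l₁ : List V) : Prop where
  sub : sp l₁ ≤ sp l
  pos : ∀ φ ∈ Φ, φ ∈ sp l₁ → Cone l φ → Cone l₁ φ

/-- Rotation of a list: the simple system `Π` with first member `a` is replaced by its image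
under the reflection in `a`, and `-a` is moved to the end. The product of the reflections does
not change. -/
def rot (E : V →ₗ[ℝ] V →ₗ[ℝ] ℝ) : List V → List V
  | [] => []
  | a :: l => (l ++ [a]).map (refl E a)

variable {E : V →ₗ[ℝ] V →ₗ[ℝ] ℝ} {Φ : Set V}

theorem Cone.add {l : List V} {x y : V} (hx : Cone l x) (hy : Cone l y) : Cone l (x + y) := by
  induction hx with
  | zero => simpa using hy
  | cons c hc ha _ ih => rw [add_assoc]; exact Cone.cons c hc ha ih

theorem Cone.smul {l : List V} {x : V} (hx : Cone l x) {c : ℝ} (hc : 0 ≤ c) : Cone l (c • x) := by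
  induction hx with
  | zero => simpa using Cone.zero
  | cons d hd ha _ ih =>
    rw [smul_add, smul_smul]; exact Cone.cons _ (mul_nonneg hc hd) ha ih

theorem Cone.of_mem {l : List V} {a : V} (ha : a ∈ l) : Cone l a := by
  simpa using Cone.cons (1 : ℝ) zero_le_one ha Cone.zero

theorem Cone.bind {l l' : List V} (h : ∀ a ∈ l, Cone l' a) {x : V} (hx : Cone l x) :
    Cone l' x := by
  induction hx with
  | zero => exact Cone.zero
  | cons c hc ha _ ih => exact ((h _ ha).smul hc).add ih

theorem Cone.mono {l l' : List V} (h : ∀ a ∈ l, a ∈ l') {x : V} (hx : Cone l x) :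
    Cone l' x := hx.bind fun a ha => Cone.of_mem (h a ha)

theorem Cone.map {l : List V} (f : V →ₗ[ℝ] V) {x : V} (hx : Cone l x) :
    Cone (l.map f) (f x) := by
  induction hx with
  | zero => simpa using Cone.zero
  | cons c hc ha _ ih =>
    rw [map_add, map_smul]; exact Cone.cons c hc (List.mem_map_of_mem ha) ih

theorem Cone.mem_sp {l : List V} {x : V} (hx : Cone l x) : x ∈ sp l := by
  induction hx with
  | zero => exact zero_mem _
  | cons c hc ha _ ih => exact add_mem (Submodule.smul_mem _ _ (Submodule.subset_span ha)) ih

theorem cone_append {l l' : List V} {x : V} (hx : Cone (l ++ l') x) :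
    ∃ y z, Cone l y ∧ Cone l' z ∧ x = y + z := by
  induction hx with
  | zero => exact ⟨0, 0, .zero, .zero, by simp⟩
  | cons c hc ha _ ih =>
    obtain ⟨y, z, hy, hz, rfl⟩ := ih
    rcases List.mem_append.1 ha with ha | ha
    · exact ⟨_, z, .cons c hc ha hy, hz, by abel⟩
    · exact ⟨y, _, hy, .cons c hc ha hz, by abel⟩

theorem cone_singleton {a x : V} (hx : Cone [a] x) : ∃ c : ℝ, 0 ≤ c ∧ x = c • a := by
  induction hx with
  | zero => exact ⟨0, le_rfl, by simp⟩
  | cons c hc ha _ ih =>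
    obtain ⟨d, hd, rfl⟩ := ih
    rw [List.mem_singleton] at ha; subst ha
    exact ⟨c + d, add_nonneg hc hd, by rw [add_smul]⟩

theorem cone_cons {a x : V} {l : List V} (hx : Cone (a :: l) x) :
    ∃ c : ℝ, 0 ≤ c ∧ ∃ y, Cone l y ∧ x = c • a + y := by
  obtain ⟨y, z, hy, hz, rfl⟩ := cone_append (l := [a]) (l' := l) hx
  obtain ⟨c, hc, rfl⟩ := cone_singleton hy
  exact ⟨c, hc, z, hz, rfl⟩

theorem cone_concat {a x : V} {l : List V} (hx : Cone (l ++ [a]) x) :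
    ∃ c : ℝ, 0 ≤ c ∧ ∃ y, Cone l y ∧ x = c • a + y := by
  obtain ⟨y, z, hy, hz, rfl⟩ := cone_append hx
  obtain ⟨c, hc, rfl⟩ := cone_singleton hz
  exact ⟨c, hc, y, hy, add_comm _ _⟩

theorem cone_nil {x : V} (hx : Cone [] x) : x = 0 := by
  induction hx with
  | zero => rfl
  | cons c hc ha _ ih => simp at ha

theorem mem_sp {l : List V} {a : V} (ha : a ∈ l) : a ∈ sp l := Submodule.subset_span ha

theorem sp_le {l : List V} {U : Submodule ℝ V} (h : ∀ a ∈ l, a ∈ U) : sp l ≤ U :=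
  Submodule.span_le.2 h

theorem sp_mono {l l' : List V} (h : ∀ a ∈ l, a ∈ l') : sp l ≤ sp l' :=
  sp_le fun a ha => mem_sp (h a ha)

theorem sp_cons {a x : V} {l : List V} (hx : x ∈ sp (a :: l)) :
    ∃ c : ℝ, ∃ y ∈ sp l, x = c • a + y := by
  have : {x | x ∈ a :: l} = insert a {x | x ∈ l} := by ext; simp
  rw [sp, this, Submodule.mem_span_insert] at hx
  exact hx

theorem sp_concat {a x : V} {l : List V} (hx : x ∈ sp (l ++ [a])) :
    ∃ c : ℝ, ∃ y ∈ sp l, x = c • a + y :=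
  sp_cons (sp_mono (by simp [or_comm]) hx)

theorem Tri.cons_apply {a y : V} {l : List V} (h : Tri E (a :: l)) (hy : y ∈ sp l) :
    E y a = 0 := by
  have : sp l ≤ LinearMap.ker (E.flip a) :=
    sp_le fun b hb => by simpa using (List.pairwise_cons.1 h).1 b hb
  simpa using this hy

theorem Tri.tail {a : V} {l : List V} (h : Tri E (a :: l)) : Tri E l :=
  (List.pairwise_cons.1 h).2

theorem tri_concat {p : V} {l : List V} :
    Tri E (l ++ [p]) ↔ Tri E l ∧ ∀ a ∈ l, E p a = 0 := by
  simp [Tri, List.pairwise_append]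

theorem perp_apply {p y : V} {l : List V} (h : ∀ a ∈ l, E p a = 0) (hy : y ∈ sp l) :
    E p y = 0 := by
  have : sp l ≤ LinearMap.ker (E p) := sp_le fun b hb => by simpa using h b hb
  simpa using this hy

theorem Tri.concat_apply {p y : V} {l : List V} (h : Tri E (l ++ [p])) (hy : y ∈ sp l) :
    E p y = 0 := perp_apply (tri_concat.1 h).2 hy

theorem refl_self {a : V} (ha : E a a = 1) : refl E a a = -a := by
  rw [refl_apply, ha]; module

theorem refl_refl {a : V} (ha : E a a = 1) (x : V) : refl E a (refl E a x) = x := by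
  simp only [refl_apply, map_sub, map_smul, LinearMap.sub_apply, LinearMap.smul_apply, ha,
    smul_eq_mul]
  module

theorem refl_mul_self {a : V} (ha : E a a = 1) : refl E a * refl E a = 1 :=
  LinearMap.ext fun x => refl_refl ha x

theorem refl_refl_eq {a : V} (ha : E a a = 1) (b : V) :
    refl E (refl E a b) * refl E a = refl E a * refl E b := by
  ext x
  simp only [Module.End.mul_apply, refl_apply, map_sub, map_smul, LinearMap.sub_apply,
    LinearMap.smul_apply, ha, smul_eq_mul]
  module

theorem refl_neg (a : V) : refl E (-a) = refl E a := by
  ext x; simp only [refl_apply, map_neg, LinearMap.neg_apply]; module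

theorem refl_mem_of_mem {U : Submodule ℝ V} {a x : V} (ha : a ∈ U) (hx : x ∈ U) :
    refl E a x ∈ U := by
  rw [refl_apply]; exact sub_mem hx (U.smul_mem _ ha)

theorem form_refl_refl {a b b' : V} (ha : E a a = 1) (hb' : E b' a = 0)
    (hb : E b a = 0) : E (refl E a b) (refl E a b') = E b b' := by
  simp only [refl_apply, map_sub, map_smul, LinearMap.sub_apply, LinearMap.smul_apply, ha,
    smul_eq_mul, hb, hb']
  ring

theorem form_refl_right {a b : V} (ha : E a a = 1) : E a (refl E a b) = - E b a := by
  simp only [refl_apply, map_sub, map_smul, smul_eq_mul, ha]; ring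

theorem unit_eq {a b : V} (ha : E a a = 1) (hb : E b b = 1) {c : ℝ} (hc : 0 ≤ c)
    (h : a = c • b) : a = b := by
  subst h
  simp only [map_smul, LinearMap.smul_apply, smul_eq_mul, hb] at ha
  have : c = 1 := by nlinarith
  simp [this]

theorem Roots.neg_mem (H : Roots E Φ) {a : V} (ha : a ∈ Φ) : -a ∈ Φ := by
  have := H.refl_mem a ha a ha
  rwa [refl_self (H.one a ha)] at this

theorem Roots.ne_zero (H : Roots E Φ) {a : V} (ha : a ∈ Φ) : a ≠ 0 := by
  rintro rfl; simpa using H.one 0 ha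

/-! ### Good lists: simple systems adapted to the form -/

theorem cone_antisymm {l : List V} (h1 : ∀ a ∈ l, E a a = 1) (ht : Tri E l) {x : V}
    (hx : Cone l x) (hx' : Cone l (-x)) : x = 0 := by
  induction l generalizing x with
  | nil => exact cone_nil hx
  | cons a l ih =>
    obtain ⟨c, hc, y, hy, rfl⟩ := cone_cons hx
    obtain ⟨d, hd, z, hz, hxz⟩ := cone_cons hx'
    have h0 := congrArg (fun v => E v a) hxz
    have ha := h1 a (by simp)
    simp only [map_neg, map_add, map_smul, LinearMap.neg_apply, LinearMap.add_apply,
      LinearMap.smul_apply, smul_eq_mul, ha, ht.cons_apply hy.mem_sp, ht.cons_apply hz.mem_sp] at h0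
    have hc0 : c = 0 := by linarith
    have hd0 : d = 0 := by linarith
    subst hc0 hd0
    have hyz : z = -y := by simpa using hxz.symm
    simpa using ih (fun a ha => h1 a (by simp [ha])) ht.tail hy (hyz ▸ hz)

theorem cone_add_eq_zero {l : List V} (h1 : ∀ a ∈ l, E a a = 1) (ht : Tri E l) {x y : V}
    (hx : Cone l x) (hy : Cone l y) (h : x + y = 0) : x = 0 :=
  cone_antisymm h1 ht hx (by rwa [neg_eq_of_add_eq_zero_right h])

/-- Members of a triangular list span extremal rays of its cone. -/
theorem cone_extremal {l : List V} (h1 : ∀ a ∈ l, E a a = 1) (ht : Tri E l) {a : V} (ha : a ∈ l)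
    {x y : V} {c : ℝ} (hx : Cone l x) (hy : Cone l y) (h : x + y = c • a) :
    ∃ d : ℝ, 0 ≤ d ∧ x = d • a := by
  induction l generalizing x y with
  | nil => simp at ha
  | cons b l ih =>
    obtain ⟨p, hp, x', hx', rfl⟩ := cone_cons hx
    obtain ⟨q, hq, y', hy', rfl⟩ := cone_cons hy
    have hb := h1 b (by simp)
    have h0 := congrArg (fun v => E v b) h
    simp only [map_add, map_smul, LinearMap.add_apply,
      LinearMap.smul_apply, smul_eq_mul, hb, ht.cons_apply hx'.mem_sp,
      ht.cons_apply hy'.mem_sp] at h0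
    rcases List.mem_cons.1 ha with rfl | ha
    · rw [hb] at h0
      have hz : x' + y' = 0 := by
        have hc : c = p + q := by linarith
        rw [hc, add_smul] at h
        have : x' + y' = (p • a + x' + (q • a + y')) - (p • a + q • a) := by abel
        rw [this, h, sub_self]
      have := cone_add_eq_zero (fun a ha => h1 a (by simp [ha])) ht.tail hx' hy' hz
      exact ⟨p, hp, by simp [this]⟩
    · rw [ht.cons_apply (mem_sp ha)] at h0
      have hp0 : p = 0 := by linarith
      have hq0 : q = 0 := by linarith
      subst hp0 hq0
      obtain ⟨d, hd, h'⟩ := ih (fun a ha => h1 a (by simp [ha])) ht.tail ha hx' hy' (by simpa using h)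
      exact ⟨d, hd, by simpa using h'⟩

theorem Good.one (H : Roots E Φ) {l : List V} (h : Good E Φ l) : ∀ a ∈ l, E a a = 1 :=
  fun a ha => H.one a (h.mem a ha)

theorem Good.antisymm (H : Roots E Φ) {l : List V} (h : Good E Φ l) {x : V} (hx : Cone l x)
    (hx' : Cone l (-x)) : x = 0 := cone_antisymm (h.one H) h.tri hx hx'

theorem Good.extremal (H : Roots E Φ) {l : List V} (h : Good E Φ l) {a b y : V} {c : ℝ}
    (ha : a ∈ l) (hb : b ∈ Φ) (hbl : Cone l b) (hy : Cone l y) (hs : b + y = c • a) : b = a := by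
  obtain ⟨d, hd, h'⟩ := cone_extremal (h.one H) h.tri ha hbl hy hs
  exact unit_eq (H.one b hb) (h.one H a ha) hd h'

theorem Compat.mem_cone (H : Roots E Φ) {l l₁ : List V} (hl : Good E Φ l) (hl₁ : Good E Φ l₁)
    (hc : Compat Φ l l₁) {b : V} (hb : b ∈ l₁) : Cone l b := by
  have hbΦ := hl₁.mem b hb
  rcases hl.sign b hbΦ (hc.sub (mem_sp hb)) with h | h
  · exact h
  · exact absurd (hl₁.antisymm H (Cone.of_mem hb)
      (hc.pos _ (H.neg_mem hbΦ) (neg_mem (mem_sp hb)) h)) (H.ne_zero hbΦ)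

theorem Compat.cone (H : Roots E Φ) {l l₁ : List V} (hl : Good E Φ l) (hl₁ : Good E Φ l₁)
    (hc : Compat Φ l l₁) {x : V} (hx : Cone l₁ x) : Cone l x :=
  hx.bind fun _ hb => hc.mem_cone H hl hl₁ hb

theorem Compat.trans {l l₁ l₂ : List V} (h : Compat Φ l l₁) (h' : Compat Φ l₁ l₂) :
    Compat Φ l l₂ :=
  ⟨h'.sub.trans h.sub, fun φ hφ hs hc => h'.pos φ hφ hs (h.pos φ hφ (h'.sub hs) hc)⟩

theorem Compat.self {l : List V} : Compat Φ l l := ⟨le_rfl, fun _ _ _ h => h⟩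

/-- If a positive multiple of a member `a` of `l` lies in the cone of a list `L` of positive roots,
then `a` belongs to `L`, since `a` spans an extremal ray. -/
theorem mem_of_cone (H : Roots E Φ) {l L : List V} (hl : Good E Φ l) {a : V} (ha : a ∈ l)
    (hL : ∀ b ∈ L, b ∈ Φ) (hL' : ∀ b ∈ L, Cone l b) {x : V} (hx : Cone L x) {c : ℝ} (hc : 0 < c)
    (hxa : x = c • a) : a ∈ L := by
  induction hx generalizing c with
  | zero =>
    exact absurd ((smul_eq_zero.1 hxa.symm).resolve_left hc.ne') (H.ne_zero (hl.mem a ha))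
  | @cons d hd b hb x hx ih =>
    have hx' : Cone l x := hx.bind hL'
    have hb' : Cone l (d • b) := (hL' b hb).smul hd
    obtain ⟨p, hp, h1⟩ := cone_extremal (hl.one H) hl.tri ha hb' hx' hxa
    obtain ⟨q, hq, h2⟩ := cone_extremal (hl.one H) hl.tri ha hx' hb' ((add_comm _ _).trans hxa)
    rcases hq.eq_or_lt with rfl | hq
    · have hdb : d • b = c • a := by rw [← hxa, h2]; simp
      have hd0 : d ≠ 0 := by
        rintro rfl
        rw [zero_smul] at hdb
        exact absurd ((smul_eq_zero.1 hdb.symm).resolve_left hc.ne') (H.ne_zero (hl.mem a ha))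
      have hba : b = (d⁻¹ * c) • a := by rw [mul_smul, ← hdb, inv_smul_smul₀ hd0]
      have := unit_eq (H.one b (hL b hb)) (hl.one H a ha) (by positivity) hba
      exact this ▸ hb
    · exact ih hq h2

theorem Good.obtuse (H : Roots E Φ) {l : List V} (hl : Good E Φ l) {a b : V} (ha : a ∈ l)
    (hb : b ∈ l) (hab : a ≠ b) : E a b + E b a ≤ 0 := by
  by_contra! hq
  have hr := H.refl_mem a (hl.mem a ha) b (hl.mem b hb)
  have hs : refl E a b ∈ sp l := refl_mem_of_mem (mem_sp ha) (mem_sp hb)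
  rcases hl.sign _ hr hs with h | h
  · rw [refl_apply] at h
    obtain ⟨d, hd, h'⟩ := cone_extremal (hl.one H) hl.tri hb (c := 1)
      ((Cone.of_mem ha).smul hq.le) h (by module)
    have h'' : a = ((E a b + E b a)⁻¹ * d) • b := by
      rw [mul_smul, ← h', inv_smul_smul₀ hq.ne']
    exact hab (unit_eq (hl.one H a ha) (hl.one H b hb) (by positivity) h'')
  · rw [refl_apply] at h
    exact hab (hl.extremal H ha (hl.mem b hb) (Cone.of_mem hb) h
      (c := E a b + E b a) (by module)).symm

/-! ### Rotation -/

theorem rot_cons {a : V} {l : List V} (ha : E a a = 1) :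
    rot E (a :: l) = l.map (refl E a) ++ [-a] := by
  simp [rot, refl_self ha]

theorem length_rot (l : List V) : (rot E l).length = l.length := by
  cases l <;> simp [rot]

theorem map_refl_map {a : V} {l : List V} (ha : E a a = 1) :
    (l.map (refl E a)).map (refl E a) = l := by
  rw [List.map_map]
  convert List.map_id l
  ext x; exact refl_refl ha x

theorem cone_rot {a : V} {l : List V} (ha : E a a = 1) {x : V} :
    Cone (rot E (a :: l)) x ↔ Cone (a :: l) (refl E a x) := by
  constructor
  · intro h
    have := h.map (refl E a)
    rw [rot, map_refl_map ha] at this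
    exact this.mono (by simp [or_comm])
  · intro h
    have := h.map (refl E a)
    rw [refl_refl ha] at this
    refine this.mono fun b hb => ?_
    obtain ⟨c, hc, rfl⟩ := List.mem_map.1 hb
    exact List.mem_map_of_mem (by simpa [or_comm] using hc)

theorem sp_rot {l : List V} (h1 : ∀ a ∈ l, E a a = 1) : sp (rot E l) = sp l := by
  cases l with
  | nil => rfl
  | cons a l =>
    have ha := h1 a (by simp)
    have h2 : ∀ b, b ∈ a :: l ↔ b ∈ l ++ [a] := by simp [or_comm]
    apply le_antisymm
    · refine sp_le fun b hb => ?_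
      simp only [rot, List.mem_map] at hb
      obtain ⟨c, hc, rfl⟩ := hb
      exact refl_mem_of_mem (mem_sp (by simp)) (mem_sp ((h2 c).2 hc))
    · have ham : a ∈ sp (rot E (a :: l)) := by
        rw [rot_cons ha, ← neg_neg a]
        exact neg_mem (mem_sp (by simp))
      refine sp_le fun b hb => ?_
      rw [← refl_refl ha b]
      exact refl_mem_of_mem ham (mem_sp (List.mem_map_of_mem ((h2 b).1 hb)))

theorem Tri.rot {l : List V} (h1 : ∀ a ∈ l, E a a = 1) (h : Tri E l) : Tri E (rot E l) := by
  cases l with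
  | nil => exact h
  | cons a l =>
    have ha := h1 a (by simp)
    rw [rot_cons ha, tri_concat]
    constructor
    · rw [Tri, List.pairwise_map]
      refine h.tail.imp_of_mem ?_
      intro b c hb hc hbc
      rw [form_refl_refl ha (h.cons_apply (mem_sp hb)) (h.cons_apply (mem_sp hc)), hbc]
    · intro b hb
      obtain ⟨c, hc, rfl⟩ := List.mem_map.1 hb
      rw [map_neg, LinearMap.neg_apply, form_refl_right ha, h.cons_apply (mem_sp hc)]; simp

theorem Good.rot (H : Roots E Φ) {l : List V} (hl : Good E Φ l) : Good E Φ (rot E l) := by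
  cases l with
  | nil => exact hl
  | cons a l =>
    have ha := hl.one H a (by simp)
    have haΦ := hl.mem a (by simp)
    refine ⟨?_, hl.tri.rot (hl.one H), ?_⟩
    · intro b hb
      simp only [DualBraid.rot, List.mem_map] at hb
      obtain ⟨c, hc, rfl⟩ := hb
      exact H.refl_mem a haΦ c (hl.mem c (by simpa [or_comm] using hc))
    · intro φ hφ hs
      rw [sp_rot (hl.one H)] at hs
      rw [cone_rot ha, cone_rot ha, map_neg]
      exact hl.sign _ (H.refl_mem a haΦ φ hφ) (refl_mem_of_mem (mem_sp (by simp)) hs)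

/-- The first member is the only positive root that rotation makes negative. -/
theorem Good.cone_rot_of_ne (H : Roots E Φ) {a : V} {l : List V} (hl : Good E Φ (a :: l)) {φ : V}
    (hφ : φ ∈ Φ) (hc : Cone (a :: l) φ) (hne : φ ≠ a) : Cone (DualBraid.rot E (a :: l)) φ := by
  have ha := hl.one H a (by simp)
  have hs : φ ∈ sp (DualBraid.rot E (a :: l)) := by rw [sp_rot (hl.one H)]; exact hc.mem_sp
  rcases (hl.rot H).sign φ hφ hs with h | h
  · exact h
  · rw [cone_rot ha, map_neg, refl_apply] at h
    exact absurd (hl.extremal H (by simp) hφ hc h (c := E a φ + E φ a) (by module)) hne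

theorem Good.form_le_of_cone_rot (H : Roots E Φ) {a : V} {l : List V} (hl : Good E Φ (a :: l))
    {x : V} (hx : Cone (DualBraid.rot E (a :: l)) x) : E a x ≤ 0 := by
  have ha := hl.one H a (by simp)
  have ht := hl.tri.rot (hl.one H)
  rw [rot_cons ha] at hx ht
  obtain ⟨c, hc, y, hy, rfl⟩ := cone_concat hx
  have := ht.concat_apply hy.mem_sp
  simp only [map_neg, LinearMap.neg_apply, neg_eq_zero] at this
  simp [this, ha, hc]

theorem Good.cone_rot_of_form_le (H : Roots E Φ) {a : V} {l : List V} (hl : Good E Φ (a :: l))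
    {x : V} (hx : Cone (a :: l) x) (h : E a x ≤ 0) : Cone (DualBraid.rot E (a :: l)) x := by
  have ha := hl.one H a (by simp)
  rw [cone_rot ha]
  obtain ⟨c, hc, y, hy, rfl⟩ := cone_cons hx
  have hya := hl.tri.cons_apply hy.mem_sp
  simp only [map_add, map_smul, smul_eq_mul, ha] at h
  have : refl E a (c • a + y) = (-(c * 1 + E a y)) • a + y := by
    simp only [refl_apply, map_add, map_smul, LinearMap.add_apply, LinearMap.smul_apply,
      smul_eq_mul, ha, hya]
    module
  rw [this]
  exact Cone.cons _ (by linarith) (by simp) (hy.mono (by simp +contextual))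

theorem sp_congr {l l' : List V} (h : ∀ a, a ∈ l ↔ a ∈ l') : sp l = sp l' :=
  le_antisymm (sp_mono fun a => (h a).1) (sp_mono fun a => (h a).2)

theorem Good.congr {l l' : List V} (hl : Good E Φ l) (h : ∀ a, a ∈ l ↔ a ∈ l')
    (ht : Tri E l') : Good E Φ l' :=
  ⟨fun a ha => hl.mem a ((h a).2 ha), ht, fun φ hφ hs =>
    (hl.sign φ hφ (by rwa [sp_congr h])).imp (Cone.mono fun a => (h a).1)
      (Cone.mono fun a => (h a).1)⟩

theorem Compat.congr {l l₁ l₁' : List V} (hc : Compat Φ l l₁) (h : ∀ a, a ∈ l₁ ↔ a ∈ l₁') :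
    Compat Φ l l₁' :=
  ⟨by rw [← sp_congr h]; exact hc.sub, fun φ hφ hs hp =>
    (hc.pos φ hφ (by rwa [sp_congr h]) hp).mono fun a => (h a).1⟩

/-- If the first member `a` of `l` lies in the span of a compatible list `l₁`, then `l₁`
can be reordered, by commuting reflections, so as to start with `a`. -/
theorem Compat.exists_cons (H : Roots E Φ) {a : V} {l l₁ : List V} (hl : Good E Φ (a :: l))
    (hl₁ : Good E Φ l₁) (hc : Compat Φ (a :: l) l₁) (ha : a ∈ sp l₁) :
    ∃ t, Good E Φ (a :: t) ∧ (∀ b, b ∈ l₁ ↔ b ∈ a :: t) ∧ (a :: t).length = l₁.length := by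
  have haΦ := hl.mem a (by simp)
  have hal : a ∈ l₁ := mem_of_cone H hl (by simp) hl₁.mem (fun b hb => hc.mem_cone H hl hl₁ hb)
    (hc.pos a haΦ ha (Cone.of_mem (by simp))) zero_lt_one (by simp)
  obtain ⟨A, C, rfl⟩ := List.append_of_mem hal
  have hm : ∀ b, b ∈ A ++ a :: C ↔ b ∈ a :: (A ++ C) := by
    intro b; simp only [List.mem_append, List.mem_cons]; tauto
  refine ⟨A ++ C, hl₁.congr hm ?_, hm, by simp; omega⟩
  have ht := hl₁.tri
  simp only [Tri, List.pairwise_append, List.pairwise_cons, List.mem_append, List.mem_cons] at ht ⊢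
  obtain ⟨h1, ⟨h2, h3⟩, h4⟩ := ht
  refine ⟨?_, h1, h3, fun x hx y hy => h4 x hx y (Or.inr hy)⟩
  rintro b (hb | hb)
  · have hab := h4 b hb a (Or.inl rfl)
    by_cases hba : b = a
    · subst hba; exact hab
    have hob := hl₁.obtuse H (a := a) (b := b) (by simp) (by simp [hb]) (Ne.symm hba)
    have hcb : Cone (a :: l) b := hc.mem_cone H hl hl₁ (by simp [hb])
    obtain ⟨c, hc0, y, hy, hby⟩ := cone_cons hcb
    have : E b a = c := by
      rw [hby]; simp [hl.tri.cons_apply hy.mem_sp, H.one a haΦ]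
    linarith
  · exact h2 b hb

theorem Compat.rot_cons (H : Roots E Φ) {a : V} {l t : List V} (hl : Good E Φ (a :: l))
    (ht : Good E Φ (a :: t)) (hc : Compat Φ (a :: l) (a :: t)) :
    Compat Φ (rot E (a :: l)) (rot E (a :: t)) := by
  have ha := hl.one H a (by simp)
  refine ⟨by rw [sp_rot (hl.one H), sp_rot (ht.one H)]; exact hc.sub, fun φ hφ hs hp => ?_⟩
  rw [sp_rot (ht.one H)] at hs
  rw [cone_rot ha] at hp ⊢
  exact hc.pos _ (H.refl_mem a (hl.mem a (by simp)) φ hφ) (refl_mem_of_mem (mem_sp (by simp)) hs) hp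

theorem Compat.rot_of_notMem (H : Roots E Φ) {a : V} {l t : List V} (hl : Good E Φ (a :: l))
    (ht : Good E Φ t) (hc : Compat Φ (a :: l) t) (ha : a ∉ sp t) :
    Compat Φ (rot E (a :: l)) t := by
  refine ⟨by rw [sp_rot (hl.one H)]; exact hc.sub, fun φ hφ hs hp => ?_⟩
  rcases ht.sign φ hφ hs with h | h
  · exact h
  · have h' := hl.cone_rot_of_ne H (H.neg_mem hφ) (hc.cone H hl ht h)
      (fun h => ha (h ▸ neg_mem hs))
    exact absurd ((hl.rot H).antisymm H hp h') (H.ne_zero hφ)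

theorem Good.concat_left (H : Roots E Φ) {p : V} {l : List V} (hl : Good E Φ (l ++ [p])) :
    Good E Φ l := by
  have hp := hl.one H p (by simp)
  have key : ∀ φ, φ ∈ sp l → Cone (l ++ [p]) φ → Cone l φ := by
    intro φ hs h
    obtain ⟨c, hc, y, hy, rfl⟩ := cone_concat h
    have h0 := hl.tri.concat_apply hs
    simp only [map_add, map_smul, smul_eq_mul, hp, hl.tri.concat_apply hy.mem_sp] at h0
    have : c = 0 := by linarith
    simpa [this] using hy
  refine ⟨fun a ha => hl.mem a (by simp [ha]), (tri_concat.1 hl.tri).1, fun φ hφ hs => ?_⟩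
  exact (hl.sign φ hφ (sp_mono (by simp +contextual) hs)).imp (key φ hs) (key _ (neg_mem hs))

theorem Compat.concat (H : Roots E Φ) {p : V} {l t : List V} (hl : Good E Φ (l ++ [p]))
    (ht : Good E Φ (t ++ [p])) (hc : Compat Φ (l ++ [p]) (t ++ [p])) : Compat Φ l t := by
  have hp := hl.one H p (by simp)
  constructor
  · intro x hx
    obtain ⟨c, y, hy, rfl⟩ := sp_concat (hc.sub (sp_mono (by simp +contextual) hx))
    have h0 := ht.tri.concat_apply hx
    simp only [map_add, map_smul, smul_eq_mul, hp, hl.tri.concat_apply hy] at h0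
    have : c = 0 := by linarith
    simpa [this] using hy
  · intro φ hφ hs h
    obtain ⟨c, hc0, y, hy, hyφ⟩ := cone_concat (hc.pos φ hφ (sp_mono (by simp +contextual) hs)
      (h.mono (by simp +contextual)))
    have h0 := ht.tri.concat_apply hs
    rw [hyφ] at h0
    simp only [map_add, map_smul, smul_eq_mul, hp, ht.tri.concat_apply hy.mem_sp] at h0
    have : c = 0 := by linarith
    rw [hyφ, this]; simpa using hy

theorem Compat.concat_left (H : Roots E Φ) {p : V} {l : List V} (hl : Good E Φ (l ++ [p])) :
    Compat Φ (l ++ [p]) l := by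
  have hp := hl.one H p (by simp)
  refine ⟨sp_mono (by simp +contextual), fun φ hφ hs h => ?_⟩
  obtain ⟨c, hc0, y, hy, rfl⟩ := cone_concat h
  have h0 := hl.tri.concat_apply hs
  simp only [map_add, map_smul, smul_eq_mul, hp, hl.tri.concat_apply hy.mem_sp] at h0
  have : c = 0 := by linarith
  simpa [this] using hy

/-! ### Iterated rotation and the Coxeter transformation -/

theorem map_one_end (l : List V) : l.map (1 : Module.End ℝ V) = l := List.map_id l

theorem prodR_nil : prodR E [] = 1 := rfl

theorem prodR_cons (a : V) (l : List V) : prodR E (a :: l) = refl E a * prodR E l := by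
  simp [prodR]

theorem prodR_append (l l' : List V) : prodR E (l ++ l') = prodR E l * prodR E l' := by
  simp [prodR]

theorem prodR_singleton (a : V) : prodR E [a] = refl E a := by simp [prodR]

theorem form_refl_self {a : V} (ha : E a a = 1) (x : V) :
    E (refl E a x) (refl E a x) = E x x := by
  simp only [refl_apply, map_sub, map_smul, LinearMap.sub_apply, LinearMap.smul_apply, ha,
    smul_eq_mul]
  ring

theorem prodR_map_refl {a : V} (ha : E a a = 1) (t : List V) :
    prodR E (t.map (refl E a)) * refl E a = refl E a * prodR E t := by
  induction t with
  | nil => simp [prodR]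
  | cons b t ih =>
    rw [List.map_cons, prodR_cons, prodR_cons, mul_assoc, ih, ← mul_assoc, refl_refl_eq ha,
      mul_assoc]

theorem prodR_rot {l : List V} (h1 : ∀ a ∈ l, E a a = 1) : prodR E (rot E l) = prodR E l := by
  cases l with
  | nil => rfl
  | cons a l =>
    have ha := h1 a (by simp)
    rw [rot_cons ha, prodR_append, prodR_singleton, refl_neg, prodR_map_refl ha, prodR_cons]

theorem rot_iterate_append (l₁ l₂ : List V) (h1 : ∀ a ∈ l₁, E a a = 1) :
    (rot E)^[l₁.length] (l₁ ++ l₂) = (l₂ ++ l₁).map (prodR E l₁) := by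
  obtain ⟨n, hn⟩ : ∃ n, l₁.length = n := ⟨_, rfl⟩
  induction n generalizing l₁ l₂ with
  | zero =>
    obtain rfl := List.length_eq_zero_iff.1 hn
    simp [prodR, map_one_end]
  | succ n ih =>
    cases l₁ with
    | nil => simp at hn
    | cons a l₁ =>
      have ha := h1 a (by simp)
      have hn' : l₁.length = n := by simpa using hn
      have key := ih (l₁.map (refl E a)) ((l₂ ++ [a]).map (refl E a)) (by
        intro b hb
        obtain ⟨c, hc, rfl⟩ := List.mem_map.1 hb
        rw [form_refl_self ha, h1 c (by simp [hc])]) (by simpa using hn')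
      have h2 : rot E (a :: l₁ ++ l₂) = l₁.map (refl E a) ++ (l₂ ++ [a]).map (refl E a) := by
        simp [rot]
      have hm : ∀ L : List V, (L.map (refl E a)).map (prodR E (l₁.map (refl E a))) =
          L.map (prodR E (a :: l₁)) := by
        intro L
        rw [List.map_map, prodR_cons, ← prodR_map_refl ha]
        rfl
      rw [List.length_map] at key
      rw [List.length_cons, Function.iterate_succ_apply, h2, key, ← List.map_append, hm]
      simp

theorem Good.rot_iterate (H : Roots E Φ) {l : List V} (hl : Good E Φ l) (k : ℕ) :
    Good E Φ ((DualBraid.rot E)^[k] l) := by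
  induction k with
  | zero => exact hl
  | succ k ih => rw [Function.iterate_succ_apply']; exact ih.rot H

theorem Good.sp_rot_iterate (H : Roots E Φ) {l : List V} (hl : Good E Φ l) (k : ℕ) :
    sp ((DualBraid.rot E)^[k] l) = sp l := by
  induction k with
  | zero => rfl
  | succ k ih => rw [Function.iterate_succ_apply', sp_rot ((hl.rot_iterate H k).one H), ih]

theorem Good.prodR_rot_iterate (H : Roots E Φ) {l : List V} (hl : Good E Φ l) (k : ℕ) :
    prodR E ((DualBraid.rot E)^[k] l) = prodR E l := by
  induction k with
  | zero => rfl
  | succ k ih => rw [Function.iterate_succ_apply', prodR_rot ((hl.rot_iterate H k).one H), ih]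

theorem length_rot_iterate (l : List V) (k : ℕ) : ((rot E)^[k] l).length = l.length := by
  induction k with
  | zero => rfl
  | succ k ih => rw [Function.iterate_succ_apply', length_rot, ih]

theorem Good.rot_iterate_mul (H : Roots E Φ) {l : List V} (hl : Good E Φ l) (n : ℕ) :
    (DualBraid.rot E)^[n * l.length] l = l.map (prodR E l ^ n) := by
  induction n with
  | zero => simp [map_one_end]
  | succ n ih =>
    have h := rot_iterate_append ((DualBraid.rot E)^[n * l.length] l) []
      ((hl.rot_iterate H _).one H)
    rw [length_rot_iterate, hl.prodR_rot_iterate H, List.append_nil, List.nil_append, ih] at h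
    rw [add_mul, one_mul, add_comm, Function.iterate_add_apply, ih, h, List.map_map, pow_succ']
    rfl

theorem Good.rot_periodic (H : Roots E Φ) {l : List V} (hl : Good E Φ l) (k : ℕ) :
    ∃ m, (DualBraid.rot E)^[m] ((DualBraid.rot E)^[k] l) = l := by
  obtain ⟨N, hN, h⟩ := H.order l hl.mem
  have hper : (DualBraid.rot E)^[N * l.length] l = l := by
    rw [hl.rot_iterate_mul H, h]; exact List.map_id l
  rcases Nat.eq_zero_or_pos l.length with h0 | h0
  · obtain rfl := List.length_eq_zero_iff.1 h0
    refine ⟨0, ?_⟩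
    rw [← List.length_eq_zero_iff, Function.iterate_zero, id, length_rot_iterate]
    rfl
  · have hp : 0 < N * l.length := by positivity
    refine ⟨k * (N * l.length) - k, ?_⟩
    rw [← Function.iterate_add_apply, Nat.sub_add_cancel (Nat.le_mul_of_pos_right k hp),
      mul_comm, Function.iterate_mul]
    exact Function.iterate_fixed hper k

/-- `w` is the transformation determined by the form `E` on the subspace `U`: it moves vectors
by elements of `U`, and the displacement of `b` represents the functional
`x ↦ -(E x b + E b x)` on `U`. Positive definiteness makes such a `w` unique. -/
def Ad (E : V →ₗ[ℝ] V →ₗ[ℝ] ℝ) (U : Submodule ℝ V) (w : Module.End ℝ V) : Prop :=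
  (∀ b, w b - b ∈ U) ∧ ∀ x ∈ U, ∀ b, E x (w b - b) = -(E x b + E b x)

theorem ad_prodR {l : List V} (h1 : ∀ a ∈ l, E a a = 1) (ht : Tri E l) :
    Ad E (sp l) (prodR E l) := by
  induction l with
  | nil =>
    refine ⟨fun b => by simp [prodR], fun x hx b => ?_⟩
    have : x = 0 := by simpa [sp] using hx
    simp [this]
  | cons a l ih =>
    obtain ⟨i1, i2⟩ := ih (fun b hb => h1 b (by simp [hb])) ht.tail
    have ha := h1 a (by simp)
    have hsub : sp l ≤ sp (a :: l) := sp_mono (by simp +contextual)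
    have hd : ∀ b, prodR E (a :: l) b - b = (prodR E l b - b) -
        (E a (prodR E l b) + E (prodR E l b) a) • a := by
      intro b
      rw [prodR_cons, Module.End.mul_apply, refl_apply]; abel
    refine ⟨fun b => ?_, fun x hx b => ?_⟩
    · rw [hd]
      exact sub_mem (hsub (i1 b)) (Submodule.smul_mem _ _ (mem_sp (by simp)))
    · obtain ⟨c, y, hy, rfl⟩ := sp_cons hx
      have e1 := i2 y hy b
      have e2 := ht.cons_apply (i1 b)
      have e3 := ht.cons_apply hy
      rw [hd]
      simp only [map_add, map_smul, map_sub, LinearMap.add_apply, LinearMap.smul_apply,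
        LinearMap.sub_apply, smul_eq_mul, ha, e3] at e1 e2 ⊢
      linear_combination e1 - c * e2

theorem Ad.unique (hpos : ∀ x, x ≠ 0 → 0 < E x x) {U : Submodule ℝ V} {w w' : Module.End ℝ V}
    (h : Ad E U w) (h' : Ad E U w') : w = w' := by
  ext b
  by_contra hne
  have hU : w b - w' b ∈ U := by simpa using sub_mem (h.1 b) (h'.1 b)
  have h1 := h.2 _ hU b
  have h2 := h'.2 _ hU b
  have h3 := hpos _ (sub_ne_zero.2 hne)
  rw [map_sub] at h1 h2 h3
  linarith

theorem prodR_congr (hpos : ∀ x, x ≠ 0 → 0 < E x x) {l l' : List V}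
    (h1 : ∀ a ∈ l, E a a = 1) (h1' : ∀ a ∈ l', E a a = 1) (ht : Tri E l) (ht' : Tri E l')
    (h : sp l = sp l') : prodR E l = prodR E l' :=
  (ad_prodR h1 ht).unique hpos (h ▸ ad_prodR h1' ht')

theorem Good.eq_zero_of_fixed (H : Roots E Φ) {l : List V} (hl : Good E Φ l) {x : V}
    (hx : x ∈ sp l) (h : prodR E l x = x) : x = 0 := by
  by_contra hne
  have h1 := (ad_prodR (hl.one H) hl.tri).2 x hx x
  have h2 := H.pos x hne
  rw [h, sub_self, map_zero] at h1
  linarith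

/-- No nonzero vector stays positive under all rotations: the sum over an orbit of the Coxeter
transformation would be a nonzero fixed vector. -/
theorem Good.exists_not_cone (H : Roots E Φ) {l : List V} (hl : Good E Φ l) {x : V}
    (hx : x ≠ 0) : ∃ k, ¬ Cone ((DualBraid.rot E)^[k] l) x := by
  by_contra! hall
  obtain ⟨N, hN, hc⟩ := H.order l hl.mem
  set c := prodR E l
  have hpow : ∀ m ≤ N, Cone l ((c ^ m) x) := by
    intro m hm
    have h := (hall ((N - m) * l.length)).map (c ^ m)
    rw [hl.rot_iterate_mul H, List.map_map, ← Module.End.coe_mul, ← pow_add,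
      Nat.add_sub_cancel' hm, hc] at h
    simpa [map_one_end] using h
  have hsum : ∀ n ≤ N, Cone l (∑ m ∈ Finset.range n, (c ^ m) x) := by
    intro n hn
    induction n with
    | zero => simpa using Cone.zero
    | succ n ih =>
      rw [Finset.sum_range_succ]
      exact (ih (by omega)).add (hpow n (by omega))
  have hsum' : ∀ n ≤ N, Cone l (∑ m ∈ Finset.range n, (c ^ (m + 1)) x) := by
    intro n hn
    induction n with
    | zero => simpa using Cone.zero
    | succ n ih =>
      rw [Finset.sum_range_succ]
      exact (ih (by omega)).add (hpow _ (by omega))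
  have hfix : c (∑ m ∈ Finset.range N, (c ^ m) x) = ∑ m ∈ Finset.range N, (c ^ m) x := by
    rw [map_sum]
    have e1 := Finset.sum_range_succ (fun m => (c ^ m) x) N
    rw [Finset.sum_range_succ', hc] at e1
    simp only [pow_zero] at e1
    have e2 := add_right_cancel e1
    rw [← e2]
    refine Finset.sum_congr rfl fun m _ => ?_
    rw [pow_succ']; rfl
  have h0 := hl.eq_zero_of_fixed H (hsum N le_rfl).mem_sp hfix
  obtain ⟨n, rfl⟩ : ∃ n, N = n + 1 := ⟨N - 1, by omega⟩
  rw [Finset.sum_range_succ'] at h0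
  rw [add_comm] at h0
  have hx0 := hpow 0 (by omega)
  exact hx (by simpa using cone_add_eq_zero (hl.one H) hl.tri hx0 (hsum' n (by omega)) h0)

/-! ### Transport of compatible lists along rotations -/

/-- A list compatible with `l` can be adjusted, keeping its span, to be compatible with `rot E l`:
it is rotated if the first member of `l` lies in its span, and left alone otherwise. -/
theorem Compat.transport (H : Roots E Φ) {l l₁ : List V} (hl : Good E Φ l) (hl₁ : Good E Φ l₁)
    (hc : Compat Φ l l₁) : ∃ l₁', Good E Φ l₁' ∧ Compat Φ (rot E l) l₁' ∧ sp l₁' = sp l₁ ∧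
      l₁'.length = l₁.length := by
  cases l with
  | nil => exact ⟨l₁, hl₁, hc, Eq.refl _, Eq.refl _⟩
  | cons a l =>
    by_cases ha : a ∈ sp l₁
    · obtain ⟨t, ht, hm, hlen⟩ := hc.exists_cons H hl hl₁ ha
      exact ⟨rot E (a :: t), ht.rot H, Compat.rot_cons H hl ht (hc.congr hm),
        by rw [sp_rot (ht.one H), sp_congr hm], by rw [length_rot, hlen]⟩
    · exact ⟨l₁, hl₁, hc.rot_of_notMem H hl hl₁ ha, Eq.refl _, Eq.refl _⟩

theorem Compat.transport_iterate (H : Roots E Φ) {l l₁ : List V} (hl : Good E Φ l)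
    (hl₁ : Good E Φ l₁) (hc : Compat Φ l l₁) (k : ℕ) : ∃ l₁', Good E Φ l₁' ∧
      Compat Φ ((rot E)^[k] l) l₁' ∧ sp l₁' = sp l₁ ∧ l₁'.length = l₁.length := by
  induction k with
  | zero => exact ⟨l₁, hl₁, hc, Eq.refl _, Eq.refl _⟩
  | succ k ih =>
    obtain ⟨l', g, c, s, e⟩ := ih
    obtain ⟨l'', g', c', s', e'⟩ := c.transport H (hl.rot_iterate H k) g
    exact ⟨l'', g', by rwa [Function.iterate_succ_apply'], s'.trans s, e'.trans e⟩

/-! ### Removing a reflection from a product -/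

/-- For a root `β` in the span of a good list `l`, the roots `E`-orthogonal to `β` on the right
have a compatible good list `l'`, and the product of `l` factors as that of `l'` times the
reflection in `β`. The list `l'` is found by rotating `l` until `β` comes first, dropping it, and
rotating on until `l` recurs. -/
theorem Good.coatom (H : Roots E Φ) {l : List V} (hl : Good E Φ l) {β : V} (hβ : β ∈ Φ)
    (hs : β ∈ sp l) : ∃ l', Good E Φ l' ∧ Compat Φ l l' ∧ l'.length + 1 = l.length ∧
      (∀ x ∈ sp l, E β x = 0 → x ∈ sp l') ∧ prodR E l = prodR E l' * refl E β := by
  wlog hc : Cone l β generalizing β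
  · have hc' := (hl.sign β hβ hs).resolve_left hc
    obtain ⟨l', h1, h2, h3, h4, h5⟩ := this (H.neg_mem hβ) (neg_mem hs) hc'
    exact ⟨l', h1, h2, h3, fun x hx h => h4 x hx (by simp [h]), by rw [h5, refl_neg]⟩
  classical
  have hex := hl.exists_not_cone H (H.ne_zero hβ)
  obtain ⟨k, hk1, hk2⟩ : ∃ k, Cone ((DualBraid.rot E)^[k] l) β ∧
      ¬ Cone ((DualBraid.rot E)^[k + 1] l) β := by
    by_contra! hcon
    obtain ⟨k, hk⟩ := hex
    refine hk ?_
    clear hk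
    induction k with
    | zero => exact hc
    | succ k ih => exact hcon k ih
  obtain ⟨m, hm⟩ := hl.rot_periodic H (k + 1)
  have hG := hl.rot_iterate H k
  have hG1 := hl.rot_iterate H (k + 1)
  have hlen := length_rot_iterate (E := E) l k
  have hsp := hl.sp_rot_iterate H (k + 1)
  rw [Function.iterate_succ_apply'] at hk2 hm hG1 hsp
  generalize (DualBraid.rot E)^[k] l = L at *
  cases L with
  | nil => exact absurd (cone_nil hk1) (H.ne_zero hβ)
  | cons a t =>
    have hβa : β = a := by
      by_contra hne
      exact hk2 (hG.cone_rot_of_ne H hβ hk1 hne)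
    subst hβa
    have h1 := H.one β hβ
    rw [DualBraid.rot_cons h1] at hG1 hm hsp
    obtain ⟨l', g, c, s, e⟩ := (Compat.concat_left H hG1).transport_iterate H hG1
      (hG1.concat_left H) m
    rw [hm] at c
    have hperp : ∀ x ∈ sp l', E β x = 0 := fun x hx => by
      have := hG1.tri.concat_apply (s ▸ hx)
      simpa using this
    have hback : ∀ x ∈ sp l, ∃ d : ℝ, ∃ y ∈ sp l', x = d • (-β) + y := fun x hx => by
      rw [← hsp] at hx
      rw [s]
      exact sp_concat hx
    refine ⟨l', g, c, ?_, ?_, ?_⟩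
    · simpa [e] using hlen
    · intro x hx h0
      obtain ⟨d, y, hy, rfl⟩ := hback x hx
      have : d = 0 := by simpa [h1, hperp y hy] using h0
      simpa [this] using hy
    · rw [← prodR_singleton, ← prodR_append]
      refine prodR_congr H.pos (hl.one H) ?_ hl.tri
        (tri_concat.2 ⟨g.tri, fun a ha => hperp a (mem_sp ha)⟩) (le_antisymm ?_ ?_)
      · intro a ha
        rcases List.mem_append.1 ha with ha | ha
        · exact g.one H a ha
        · rw [List.mem_singleton.1 ha, h1]
      · intro x hx
        obtain ⟨d, y, hy, rfl⟩ := hback x hx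
        exact add_mem (Submodule.smul_mem _ _ (neg_mem (mem_sp (by simp))))
          (sp_mono (by simp +contextual) hy)
      · refine sp_le fun a ha => ?_
        rcases List.mem_append.1 ha with ha | ha
        · exact c.sub (mem_sp ha)
        · rw [List.mem_singleton.1 ha]; exact hs

/-- Iterating `Good.coatom`: a triangular list of roots in the span of `l` splits off on the right
of the product of `l`, leaving the product of a compatible good list. -/
theorem Good.strip (H : Roots E Φ) {l τ : List V} (hl : Good E Φ l) (hτ : Tri E τ)
    (hΦ : ∀ a ∈ τ, a ∈ Φ) (hs : ∀ a ∈ τ, a ∈ sp l) : ∃ l', Good E Φ l' ∧ Compat Φ l l' ∧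
      l'.length + τ.length = l.length ∧ prodR E l = prodR E l' * prodR E τ := by
  induction τ using List.reverseRecOn generalizing l with
  | nil => exact ⟨l, hl, Compat.self, Eq.refl _, by simp [prodR]⟩
  | append_singleton τ β ih =>
    obtain ⟨l₁, g, c, e, hsp, hp⟩ := hl.coatom H (hΦ β (by simp)) (hs β (by simp))
    obtain ⟨l', g', c', e', hp'⟩ := ih g (tri_concat.1 hτ).1 (fun a ha => hΦ a (by simp [ha]))
      (fun a ha => hsp a (hs a (by simp [ha])) ((tri_concat.1 hτ).2 a ha))
    exact ⟨l', g', c.trans c', by simp; omega, by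
      rw [hp, hp', prodR_append, prodR_singleton, mul_assoc]⟩

theorem prodR_sub_mem (ψ : List V) (b : V) : prodR E ψ b - b ∈ sp ψ := by
  induction ψ with
  | nil => simp [prodR]
  | cons a ψ ih =>
    have : prodR E (a :: ψ) b - b = (prodR E ψ b - b) -
        (E a (prodR E ψ b) + E (prodR E ψ b) a) • a := by
      rw [prodR_cons, Module.End.mul_apply, refl_apply]; abel
    rw [this]
    exact sub_mem (sp_mono (by simp +contextual) ih) (Submodule.smul_mem _ _ (mem_sp (by simp)))

theorem finiteDimensional_sp (l : List V) : FiniteDimensional ℝ (sp l) :=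
  FiniteDimensional.span_of_finite ℝ (List.finite_toSet l)

theorem Tri.length_le_finrank {l : List V} (h1 : ∀ a ∈ l, E a a = 1) (ht : Tri E l) :
    l.length ≤ Module.finrank ℝ (sp l) := by
  induction l with
  | nil => simp
  | cons a l ih =>
    have := finiteDimensional_sp (a :: l)
    have hlt : sp l < sp (a :: l) := by
      refine lt_of_le_of_ne (sp_mono (by simp +contextual)) fun h => ?_
      have ha : a ∈ sp l := h ▸ mem_sp (by simp)
      have := ht.cons_apply ha
      rw [h1 a (by simp)] at this
      exact one_ne_zero this
    have := Submodule.finrank_lt_finrank_of_lt hlt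
    have := ih (fun b hb => h1 b (by simp [hb])) ht.tail
    simp only [List.length_cons]; omega

theorem finrank_sp_le (l : List V) : Module.finrank ℝ (sp l) ≤ l.length := by
  have h : {x | x ∈ l} = Set.range l.get := by
    ext x; simp [List.mem_iff_get]
  rw [sp, h]
  simpa [Set.finrank] using finrank_range_le_card (R := ℝ) l.get

/-- A factorisation, into at most as many reflections, of the product of a triangular list is a
factorisation into reflections in roots spanning the same subspace. -/
theorem sp_eq_of_prodR_eq (H : Roots E Φ) {l ψ : List V} (hl : ∀ a ∈ l, E a a = 1)
    (ht : Tri E l) (h : prodR E l = prodR E ψ) (hlen : ψ.length ≤ l.length) :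
    sp ψ = sp l ∧ ψ.length = l.length := by
  have := finiteDimensional_sp l
  have := finiteDimensional_sp ψ
  obtain ⟨a1, a2⟩ := ad_prodR hl ht
  let D : sp l →ₗ[ℝ] sp l :=
    (prodR E l - 1).restrict (p := sp l) (q := sp l) (fun x _ => by simpa using a1 x)
  have hinj : Function.Injective D := by
    rw [← LinearMap.ker_eq_bot, LinearMap.ker_eq_bot']
    rintro ⟨x, hx⟩ h0
    have h0' : prodR E l x - x = 0 := by simpa [D, LinearMap.restrict] using congrArg Subtype.val h0
    by_contra hne
    have e1 := a2 x hx x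
    have e2 := H.pos x (fun h => hne (by simp [h]))
    rw [h0', map_zero] at e1
    linarith
  have hle : sp l ≤ sp ψ := by
    intro x hx
    obtain ⟨y, hy⟩ := LinearMap.surjective_of_injective hinj ⟨x, hx⟩
    have : prodR E l y - y = x := by simpa [D, LinearMap.restrict] using congrArg Subtype.val hy
    rw [← this, h]
    exact prodR_sub_mem ψ _
  have e1 := ht.length_le_finrank hl
  have e2 := finrank_sp_le ψ
  have e3 := Submodule.finrank_mono hle
  exact ⟨(Submodule.eq_of_le_of_finrank_le hle (by omega)).symm, by omega⟩

/-- Left factors of the product of a good list are products of compatible good lists. -/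
theorem Good.left_factor (H : Roots E Φ) {l ψ τ : List V} (hl : Good E Φ l)
    (hτ : ∀ a ∈ τ, a ∈ Φ) (h : prodR E l = prodR E ψ * prodR E τ)
    (hlen : ψ.length + τ.length = l.length) : ∃ l', Good E Φ l' ∧ Compat Φ l l' ∧
      l'.length = ψ.length ∧ prodR E l' = prodR E ψ := by
  induction τ using List.reverseRecOn generalizing l with
  | nil => exact ⟨l, hl, Compat.self, by simpa using hlen.symm, by simpa [prodR] using h⟩
  | append_singleton τ β ih =>
    rw [← prodR_append] at h
    have hs := (sp_eq_of_prodR_eq H (hl.one H) hl.tri h (by simp at hlen ⊢; omega)).1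
    have hβ := hτ β (by simp)
    obtain ⟨l₁, g, c, e, -, hp⟩ := hl.coatom H hβ (hs ▸ mem_sp (by simp))
    have h' : prodR E l₁ = prodR E ψ * prodR E τ := by
      have := congrArg (· * refl E β) (hp.symm.trans h)
      simpa [prodR_append, prodR_singleton, mul_assoc, refl_mul_self (H.one β hβ)] using this
    obtain ⟨l', g', c', e', hp'⟩ := ih g (fun a ha => hτ a (by simp [ha])) h'
      (by simp at hlen; omega)
    exact ⟨l', g', c.trans c', e', hp'⟩

/-! ### Triangular bases of intersections -/

/-- A vector `x` in the cone of a compatible list stays there under rotation as long as the first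
member `a` of `l` satisfies `E a x ≤ 0`. -/
theorem Compat.transport_cone (H : Roots E Φ) {a x : V} {l l₁ : List V}
    (hl : Good E Φ (a :: l)) (hl₁ : Good E Φ l₁) (hc : Compat Φ (a :: l) l₁) (hx : Cone l₁ x)
    (hax : E a x ≤ 0) : ∃ l₁', Good E Φ l₁' ∧ Compat Φ (rot E (a :: l)) l₁' ∧ sp l₁' = sp l₁ ∧
      Cone l₁' x := by
  by_cases ha : a ∈ sp l₁
  · obtain ⟨t, ht, hm, hlen⟩ := hc.exists_cons H hl hl₁ ha
    exact ⟨rot E (a :: t), ht.rot H, Compat.rot_cons H hl ht (hc.congr hm),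
      by rw [sp_rot (ht.one H), sp_congr hm],
      ht.cone_rot_of_form_le H (hx.mono fun b => (hm b).1) hax⟩
  · exact ⟨l₁, hl₁, hc.rot_of_notMem H hl hl₁ ha, Eq.refl _, hx⟩

/-- If the first member `a` of `l` satisfies `0 < E a x`, then `a` lies in the span of the
compatible list `l₁`; removing `a` from the rotations of both lists gives shorter compatible
lists, and `x - E a x • a` is in the cone of the shorter one. -/
theorem Compat.descend (H : Roots E Φ) {a x : V} {l l₁ : List V}
    (hl : Good E Φ (a :: l)) (hl₁ : Good E Φ l₁) (hc : Compat Φ (a :: l) l₁) (hx : Cone l₁ x)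
    (hax : 0 < E a x) : ∃ t, Good E Φ t ∧ Compat Φ (l.map (refl E a)) t ∧ sp t ≤ sp l₁ ∧
      a ∈ sp l₁ ∧ (∀ b ∈ sp t, E a b = 0) ∧ Cone t (x - E a x • a) := by
  have h1 := hl.one H a (by simp)
  have ha : a ∈ sp l₁ := by
    by_contra ha
    have : Cone (rot E (a :: l)) x := hx.bind fun b hb =>
      hl.cone_rot_of_ne H (hl₁.mem b hb) (hc.mem_cone H hl hl₁ hb) (fun h => ha (h ▸ mem_sp hb))
    exact absurd (hl.form_le_of_cone_rot H this) (not_le.2 hax)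
  obtain ⟨t, ht, hm, hlen⟩ := hc.exists_cons H hl hl₁ ha
  have hcr := Compat.rot_cons H hl ht (hc.congr hm)
  have hgl := hl.rot H
  have hgt := ht.rot H
  have hsp := sp_rot (ht.one H)
  rw [DualBraid.rot_cons h1] at hcr hgl hgt hsp
  rw [DualBraid.rot_cons h1] at hcr
  refine ⟨t.map (refl E a), hgt.concat_left H, hcr.concat H hgl hgt, ?_, ha, ?_, ?_⟩
  · rw [sp_congr hm, ← hsp]
    exact sp_mono (by simp +contextual)
  · intro b hb
    simpa using hgt.tri.concat_apply hb
  · obtain ⟨c, hc0, y, hy, rfl⟩ := cone_cons (hx.mono fun b => (hm b).1)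
    have hya := ht.tri.cons_apply hy.mem_sp
    have : c • a + y - E a (c • a + y) • a = refl E a y := by
      simp only [refl_apply, map_add, map_smul, smul_eq_mul, h1, hya]
      module
    rw [this]
    exact hy.map _

/-- A vector in the cones of two lists compatible with `l` lies in the span of a triangular list
of roots from the intersection of their spans. Rotate `l` until its first member `a` satisfies
`0 < E a x`; then `a` belongs to both lists, and subtracting `E a x • a` from `x` reduces to
lists which are shorter by one. -/
theorem Good.exists_tri (H : Roots E Φ) (n : ℕ) : ∀ {l l₁ l₂ : List V}, l.length = n →
    Good E Φ l → Good E Φ l₁ → Good E Φ l₂ → Compat Φ l l₁ → Compat Φ l l₂ →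
    ∀ {x : V}, Cone l₁ x → Cone l₂ x →
    ∃ τ, Tri E τ ∧ (∀ a ∈ τ, a ∈ Φ ∧ a ∈ sp l₁ ∧ a ∈ sp l₂) ∧ x ∈ sp τ := by
  induction n with
  | zero =>
    intro l l₁ l₂ hlen hl hl₁ hl₂ hc₁ hc₂ x hx₁ hx₂
    obtain rfl := List.length_eq_zero_iff.1 hlen
    exact ⟨[], List.Pairwise.nil, by simp, by simp [cone_nil (hc₁.cone H hl hl₁ hx₁)]⟩
  | succ n ihn =>
    intro l l₁ l₂ hlen hl hl₁ hl₂ hc₁ hc₂ x hx₁ hx₂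
    by_cases hx0 : x = 0
    · exact ⟨[], List.Pairwise.nil, by simp, by simp [hx0]⟩
    obtain ⟨k, hk⟩ := hl.exists_not_cone H hx0
    induction k generalizing l l₁ l₂ with
    | zero => exact absurd (hc₁.cone H hl hl₁ hx₁) hk
    | succ k ihk =>
      cases l with
      | nil => simp at hlen
      | cons a l =>
        rcases le_or_gt (E a x) 0 with hax | hax
        · obtain ⟨m₁, g₁, c₁, s₁, x₁⟩ := hc₁.transport_cone H hl hl₁ hx₁ hax
          obtain ⟨m₂, g₂, c₂, s₂, x₂⟩ := hc₂.transport_cone H hl hl₂ hx₂ hax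
          rw [← s₁, ← s₂]
          rw [Function.iterate_succ_apply] at hk
          exact ihk (by rw [length_rot, hlen]) (hl.rot H) g₁ g₂ c₁ c₂ x₁ x₂ hk
        · obtain ⟨m₁, g₁, c₁, s₁, a₁, e₁, x₁⟩ := hc₁.descend H hl hl₁ hx₁ hax
          obtain ⟨m₂, g₂, c₂, s₂, a₂, e₂, x₂⟩ := hc₂.descend H hl hl₂ hx₂ hax
          have hg := hl.rot H
          rw [DualBraid.rot_cons (hl.one H a (by simp))] at hg
          obtain ⟨τ, t1, t2, t3⟩ := ihn (by simpa using hlen) (hg.concat_left H) g₁ g₂ c₁ c₂ x₁ x₂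
          refine ⟨τ ++ [a], tri_concat.2 ⟨t1, fun b hb => e₁ b (t2 b hb).2.1⟩, ?_, ?_⟩
          · intro b hb
            rcases List.mem_append.1 hb with hb | hb
            · exact ⟨(t2 b hb).1, s₁ (t2 b hb).2.1, s₂ (t2 b hb).2.2⟩
            · rw [List.mem_singleton.1 hb]
              exact ⟨hl.mem a (by simp), a₁, a₂⟩
          · have : x = (x - E a x • a) + E a x • a := by abel
            rw [this]
            exact add_mem (sp_mono (by simp +contextual) t3)
              (Submodule.smul_mem _ _ (mem_sp (by simp)))

/-- A subspace containing `∑ εⁱ rᵢ` for infinitely many `ε` contains every `rᵢ`. -/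
theorem mem_of_infinite {p : ℕ} (r : Fin p → V) (U : Submodule ℝ V) {S : Set ℕ}
    (hS : S.Infinite) (h : ∀ ε ∈ S, ∑ i : Fin p, (ε : ℝ) ^ (i : ℕ) • r i ∈ U) (i : Fin p) :
    r i ∈ U := by
  by_contra hi
  obtain ⟨f, hf, hU⟩ := Submodule.exists_le_ker_of_notMem hi
  let P : Polynomial ℝ := ∑ j : Fin p, Polynomial.C (f (r j)) * Polynomial.X ^ (j : ℕ)
  have hP : P = 0 := by
    refine Polynomial.eq_zero_of_infinite_isRoot P ?_
    refine (hS.image (f := fun n : ℕ => (n : ℝ)) (Nat.cast_injective.injOn)).mono ?_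
    rintro _ ⟨ε, hε, rfl⟩
    have := LinearMap.mem_ker.1 (hU (h ε hε))
    simp only [map_sum, map_smul, smul_eq_mul] at this
    simp only [Set.mem_ofPred_eq, Polynomial.IsRoot.def, P, Polynomial.eval_finsetSum,
      Polynomial.eval_mul, Polynomial.eval_C, Polynomial.eval_pow, Polynomial.eval_X]
    rw [← this]
    exact Finset.sum_congr rfl fun j _ => mul_comm _ _
  have hc : P.coeff i = f (r i) := by
    simp [P, Polynomial.coeff_X_pow, Fin.val_inj]
  exact hf (by rw [← hc, hP, Polynomial.coeff_zero])

/-- Two subspaces spanned by lists compatible with `l` have a meet: a triangular list of common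
roots which spans all their common roots. `Good.exists_tri` is applied to the generic positive
combinations `∑ εⁱ rᵢ` of the common positive roots; infinitely many `ε` give the same list of
roots, up to order and repetition, and then its span contains every `rᵢ`. -/
theorem Good.meet (H : Roots E Φ) {l l₁ l₂ : List V} (hl : Good E Φ l) (hl₁ : Good E Φ l₁)
    (hl₂ : Good E Φ l₂) (hc₁ : Compat Φ l l₁) (hc₂ : Compat Φ l l₂) :
    ∃ τ, Tri E τ ∧ (∀ a ∈ τ, a ∈ Φ ∧ a ∈ sp l₁ ∧ a ∈ sp l₂) ∧
      ∀ φ ∈ Φ, φ ∈ sp l₁ → φ ∈ sp l₂ → φ ∈ sp τ := by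
  classical
  have hfin : {φ ∈ Φ | φ ∈ sp l₁ ∧ φ ∈ sp l₂ ∧ Cone l φ}.Finite := H.finite.subset fun _ h => h.1
  set R := hfin.toFinset.toList with hR
  have hRmem : ∀ φ, φ ∈ R ↔ φ ∈ Φ ∧ φ ∈ sp l₁ ∧ φ ∈ sp l₂ ∧ Cone l φ := by
    intro φ; rw [hR, Finset.mem_toList, Set.Finite.mem_toFinset]; rfl
  let r : Fin R.length → V := R.get
  have hr : ∀ i, r i ∈ R := fun i => R.get_mem i
  have hcone : ∀ (m : List V), (∀ φ ∈ R, Cone m φ) → ∀ ε : ℕ,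
      Cone m (∑ i : Fin R.length, (ε : ℝ) ^ (i : ℕ) • r i) := by
    intro m hm ε
    refine Finset.sum_induction _ (Cone m) (fun _ _ => Cone.add) Cone.zero fun i _ => ?_
    exact (hm _ (hr i)).smul (by positivity)
  have key : ∀ ε : ℕ, ∃ τ, Tri E τ ∧ (∀ a ∈ τ, a ∈ Φ ∧ a ∈ sp l₁ ∧ a ∈ sp l₂) ∧
      ∑ i : Fin R.length, (ε : ℝ) ^ (i : ℕ) • r i ∈ sp τ := fun ε =>
    Good.exists_tri H _ (Eq.refl _) hl hl₁ hl₂ hc₁ hc₂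
      (hcone l₁ (fun φ h => by
        obtain ⟨h1, h2, h3, h4⟩ := (hRmem φ).1 h; exact hc₁.pos φ h1 h2 h4) ε)
      (hcone l₂ (fun φ h => by
        obtain ⟨h1, h2, h3, h4⟩ := (hRmem φ).1 h; exact hc₂.pos φ h1 h3 h4) ε)
  choose τ t1 t2 t3 using key
  have := H.finite.finite_subsets.to_subtype
  let F : ℕ → {S : Set V | S ⊆ Φ} := fun ε => ⟨{x | x ∈ τ ε}, fun x hx => (t2 ε x hx).1⟩
  obtain ⟨S, hS⟩ := Finite.exists_infinite_fiber F
  have hS' := Set.infinite_coe_iff.1 hS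
  obtain ⟨ε₀, hε₀⟩ := hS'.nonempty
  have hall : ∀ ε ∈ F ⁻¹' {S}, sp (τ ε) = sp (τ ε₀) := by
    intro ε hε
    have h := congrArg Subtype.val ((Set.mem_singleton_iff.1 hε).trans
      (Set.mem_singleton_iff.1 hε₀).symm)
    exact congrArg (Submodule.span ℝ) h
  refine ⟨τ ε₀, t1 ε₀, t2 ε₀, fun φ hφ h1 h2 => ?_⟩
  have hpos : ∀ φ ∈ R, φ ∈ sp (τ ε₀) := by
    intro φ h
    obtain ⟨i, rfl⟩ := List.mem_iff_get.1 h
    exact mem_of_infinite r (sp (τ ε₀)) hS' (fun ε hε => hall ε hε ▸ t3 ε) i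
  rcases hl.sign φ hφ (hc₁.sub h1) with h | h
  · exact hpos φ ((hRmem φ).2 ⟨hφ, h1, h2, h⟩)
  · simpa using hpos (-φ) ((hRmem _).2 ⟨H.neg_mem hφ, neg_mem h1, neg_mem h2, h⟩)

end Form

/-! ### The geometric representation -/

section Rank2

variable {V : Type*} [AddCommGroup V] [Module ℝ V]

theorem refl_apply_symm {T : V →ₗ[ℝ] V →ₗ[ℝ] ℝ} (hT : ∀ x y, T x y = T y x) (a x : V) :
    refl T a x = x - (2 * T a x) • a := by
  rw [refl_apply, hT x a, two_mul]

theorem refl_comb {T : V →ₗ[ℝ] V →ₗ[ℝ] ℝ} (hT : ∀ x y, T x y = T y x) {a b : V} {φ : ℝ}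
    (ha : T a a = 1) (hab : T a b = -Real.cos φ) (θ : ℝ) :
    refl T a (Real.sin (θ + φ) • b + Real.sin θ • a) =
      Real.sin (θ + φ) • b + Real.sin (θ + 2 * φ) • a := by
  have h : Real.sin (θ + 2 * φ) = 2 * Real.cos φ * Real.sin (θ + φ) - Real.sin θ := by
    have h1 := Real.sin_add (θ + φ) φ
    have h2 := Real.sin_sub (θ + φ) φ
    have e1 : θ + φ + φ = θ + 2 * φ := by ring
    have e2 : θ + φ - φ = θ := by ring
    rw [e1] at h1
    rw [e2] at h2
    linarith
  rw [refl_apply_symm hT, h]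
  simp only [map_add, map_smul, smul_eq_mul, ha, hab]
  module

theorem refl_braid {T : V →ₗ[ℝ] V →ₗ[ℝ] ℝ} (hT : ∀ x y, T x y = T y x) {a b : V} {φ : ℝ}
    {m : ℕ} (ha : T a a = 1) (hb : T b b = 1) (hab : T a b = -Real.cos φ)
    (hsin : Real.sin φ ≠ 0) (hm : m * φ = Real.pi) : (refl T a * refl T b) ^ m = 1 := by
  have hba : T b a = -Real.cos φ := (hT b a).trans hab
  set g := refl T a * refl T b with hg
  have step : ∀ θ, g (Real.sin (θ + φ) • a + Real.sin θ • b) =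
      Real.sin (θ + 2 * φ + φ) • a + Real.sin (θ + 2 * φ) • b := by
    intro θ
    rw [hg, Module.End.mul_apply, refl_comb hT hb hba, add_comm]
    have := refl_comb hT ha hab (θ + φ)
    rw [show θ + φ + φ = θ + 2 * φ by ring] at this
    rw [this, add_comm]
    congr 3; ring
  have steps : ∀ n : ℕ, ∀ θ, (g ^ n) (Real.sin (θ + φ) • a + Real.sin θ • b) =
      Real.sin (θ + n * (2 * φ) + φ) • a + Real.sin (θ + n * (2 * φ)) • b := by
    intro n
    induction n with
    | zero => intro θ; simp
    | succ n ih =>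
      intro θ
      rw [pow_succ', Module.End.mul_apply, ih, step]
      push_cast
      congr 3 <;> ring
  have hfix : ∀ θ, (g ^ m) (Real.sin (θ + φ) • a + Real.sin θ • b) =
      Real.sin (θ + φ) • a + Real.sin θ • b := by
    intro θ
    rw [steps, show (m : ℝ) * (2 * φ) = 2 * Real.pi by linarith, Real.sin_add_two_pi,
      show θ + 2 * Real.pi + φ = θ + φ + 2 * Real.pi by ring, Real.sin_add_two_pi]
  have fa : (g ^ m) a = a := by
    have := hfix 0
    simp only [zero_add, Real.sin_zero, zero_smul, add_zero, map_smul] at this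
    exact smul_right_injective V hsin this
  have fb : (g ^ m) b = b := by
    have := hfix (-φ)
    simp only [neg_add_cancel, Real.sin_zero, zero_smul, zero_add, map_smul, Real.sin_neg] at this
    exact smul_right_injective V (neg_ne_zero.2 hsin) this
  ext x
  have hs2 : Real.sin φ ^ 2 = 1 - Real.cos φ ^ 2 := by
    have := Real.sin_sq_add_cos_sq φ; linarith
  -- the component of `x` orthogonal to `a` and `b`
  obtain ⟨u, v, hu, hv⟩ : ∃ u v : ℝ, T a (x - u • a - v • b) = 0 ∧
      T b (x - u • a - v • b) = 0 := by
    have hne : 1 - Real.cos φ ^ 2 ≠ 0 := by rw [← hs2]; exact pow_ne_zero 2 hsin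
    refine ⟨(T a x + Real.cos φ * T b x) / (1 - Real.cos φ ^ 2),
      (Real.cos φ * T a x + T b x) / (1 - Real.cos φ ^ 2), ?_, ?_⟩
    · simp only [map_sub, map_smul, smul_eq_mul, ha, hab]; field_simp; ring
    · simp only [map_sub, map_smul, smul_eq_mul, hb, hba]; field_simp; ring
  have hz : g (x - u • a - v • b) = x - u • a - v • b := by
    rw [hg, Module.End.mul_apply, refl_apply_symm hT b, hv, refl_apply_symm hT a]
    simp [hu]
  have hzm : ∀ n : ℕ, (g ^ n) (x - u • a - v • b) = x - u • a - v • b := by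
    intro n
    induction n with
    | zero => simp
    | succ n ih => rw [pow_succ', Module.End.mul_apply, ih, hz]
  have hx : x = (x - u • a - v • b) + u • a + v • b := by abel
  rw [Module.End.one_apply]
  conv_lhs => rw [hx]
  rw [map_add, map_add, hzm, map_smul, map_smul, fa, fb, ← hx]

end Rank2

section Tits

variable [Fintype B] [DecidableEq B]

/-- The standard basis vectors, which serve as simple roots. -/
def simpleRoot (i : B) : B → ℝ := Pi.single i 1

/-- The Tits form, with `-cos (π / m)` for a pair of simple roots whose reflections have a
product of order `m`. (If `M i j = 0`, which stands for infinite order, the convention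
`π / 0 = 0` gives the correct value `-1`.) -/
noncomputable def tits (M : CoxeterMatrix B) : (B → ℝ) →ₗ[ℝ] (B → ℝ) →ₗ[ℝ] ℝ :=
  Matrix.toLinearMap₂' ℝ (Matrix.of fun i j => -Real.cos (Real.pi / M i j))

theorem tits_simple (i j : B) :
    tits M (simpleRoot i) (simpleRoot j) = -Real.cos (Real.pi / M i j) := by
  simp [tits, simpleRoot, Matrix.toLinearMap₂'_apply, Pi.single_apply]

theorem ext_simpleRoot {f g : (B → ℝ) →ₗ[ℝ] (B → ℝ) →ₗ[ℝ] ℝ}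
    (h : ∀ i j, f (simpleRoot i) (simpleRoot j) = g (simpleRoot i) (simpleRoot j)) : f = g := by
  refine LinearMap.ext_basis (Pi.basisFun ℝ B) (Pi.basisFun ℝ B) fun i j => ?_
  simpa [simpleRoot] using h i j

theorem tits_symm (x y : B → ℝ) : tits M x y = tits M y x := by
  have : tits M = (tits M).flip := ext_simpleRoot fun i j => by
    rw [LinearMap.flip_apply, tits_simple, tits_simple, M.symmetric]
  exact LinearMap.congr_fun₂ this x y

theorem tits_simple_self (i : B) : tits M (simpleRoot i) (simpleRoot i) = 1 := by
  simp [tits_simple]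

theorem tits_liftable : M.IsLiftable (fun i => refl (tits M) (simpleRoot i)) := by
  intro i j
  by_cases hij : i = j
  · subst hij
    simp [refl_mul_self (tits_simple_self i)]
  by_cases hm : M i j = 0
  · simp [hm]
  have h1 := M.off_diagonal i j hij
  have h2 : 2 ≤ M i j := by omega
  have h2' : (2 : ℝ) ≤ M i j := by exact_mod_cast h2
  refine refl_braid tits_symm (φ := Real.pi / M i j) (tits_simple_self i) (tits_simple_self j)
    (tits_simple i j) (ne_of_gt (Real.sin_pos_of_pos_of_lt_pi (by positivity) ?_)) ?_
  · exact div_lt_self Real.pi_pos (by linarith)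
  · field_simp

/-- The geometric representation of a Coxeter group. -/
noncomputable def geomRep (cs : CoxeterSystem M W) : W →* Module.End ℝ (B → ℝ) :=
  cs.lift ⟨_, tits_liftable⟩

theorem geomRep_simple (cs : CoxeterSystem M W) (i : B) :
    geomRep cs (cs.simple i) = refl (tits M) (simpleRoot i) :=
  cs.lift_apply_simple tits_liftable i

theorem tits_refl {a : B → ℝ} (ha : tits M a a = 1) (x y : B → ℝ) :
    tits M (refl (tits M) a x) (refl (tits M) a y) = tits M x y := by
  rw [refl_apply_symm tits_symm, refl_apply_symm tits_symm]
  simp only [map_sub, map_smul, LinearMap.sub_apply, LinearMap.smul_apply, smul_eq_mul, ha,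
    tits_symm x a]
  ring

theorem tits_geomRep (cs : CoxeterSystem M W) (w : W) (x y : B → ℝ) :
    tits M (geomRep cs w x) (geomRep cs w y) = tits M x y := by
  induction w using cs.simple_induction_left generalizing x y with
  | one => simp
  | mul_simple_left w i ih =>
    rw [map_mul, Module.End.mul_apply, Module.End.mul_apply, geomRep_simple,
      tits_refl (tits_simple_self i), ih]

theorem geomRep_inv_apply (cs : CoxeterSystem M W) (w : W) (x : B → ℝ) :
    geomRep cs w (geomRep cs w⁻¹ x) = x := by
  rw [← Module.End.mul_apply, ← map_mul, mul_inv_cancel, map_one, Module.End.one_apply]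

theorem geomRep_conj (cs : CoxeterSystem M W) (w : W) (i : B) :
    geomRep cs (w * cs.simple i * w⁻¹) = refl (tits M) (geomRep cs w (simpleRoot i)) := by
  refine LinearMap.ext fun x => ?_
  have h := tits_geomRep cs w (simpleRoot i) (geomRep cs w⁻¹ x)
  rw [geomRep_inv_apply] at h
  rw [map_mul, map_mul, Module.End.mul_apply, Module.End.mul_apply, geomRep_simple,
    refl_apply_symm tits_symm, refl_apply_symm tits_symm, map_sub, map_smul, geomRep_inv_apply, h]

/-- The Tits form of a finite Coxeter group is positive definite: it agrees, up to rescaling the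
simple roots, with the average of the dot product over the group. -/
theorem tits_pos [Finite W] (cs : CoxeterSystem M W) (x : B → ℝ) (hx : x ≠ 0) :
    0 < tits M x x := by
  have := Fintype.ofFinite W
  let A : (B → ℝ) →ₗ[ℝ] (B → ℝ) →ₗ[ℝ] ℝ :=
    ∑ w : W, (dotProductBilin ℝ ℝ).compl₁₂ (geomRep cs w) (geomRep cs w)
  have hA : ∀ x y, A x y = ∑ w : W, geomRep cs w x ⬝ᵥ geomRep cs w y := by
    intro x y; simp [A, LinearMap.sum_apply]
  have hinv : ∀ v x y, A (geomRep cs v x) (geomRep cs v y) = A x y := by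
    intro v x y
    rw [hA, hA, ← Equiv.sum_comp (Equiv.mulRight v) (fun w => geomRep cs w x ⬝ᵥ geomRep cs w y)]
    simp
  have hsymm : ∀ x y, A x y = A y x := by
    intro x y; rw [hA, hA]; exact Finset.sum_congr rfl fun w _ => dotProduct_comm _ _
  have hpos : ∀ x, x ≠ 0 → 0 < A x x := by
    intro x hx
    rw [hA]
    refine Finset.sum_pos' (fun w _ => ?_) ⟨1, Finset.mem_univ _, ?_⟩
    · exact Finset.sum_nonneg fun i _ => mul_self_nonneg _
    · rw [map_one, Module.End.one_apply]
      obtain ⟨i, hi⟩ := Function.ne_iff.1 hx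
      exact Finset.sum_pos' (fun i _ => mul_self_nonneg _)
        ⟨i, Finset.mem_univ _, mul_self_pos.2 hi⟩
  have hsr : ∀ i : B, simpleRoot i ≠ 0 := fun i h => by
    simpa [simpleRoot] using congrFun h i
  have hrel : ∀ i y, A (simpleRoot i) y = tits M (simpleRoot i) y *
      A (simpleRoot i) (simpleRoot i) := by
    intro i y
    have h := hinv (cs.simple i) (simpleRoot i) y
    rw [geomRep_simple, refl_self (tits_simple_self i), refl_apply_symm tits_symm] at h
    simp only [map_neg, map_sub, map_smul, LinearMap.neg_apply, smul_eq_mul] at h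
    linarith
  set d : B → ℝ := fun i => A (simpleRoot i) (simpleRoot i) with hd
  have hdpos : ∀ i, 0 < d i := fun i => hpos _ (hsr i)
  let D : (B → ℝ) →ₗ[ℝ] (B → ℝ) := LinearMap.pi fun i => (Real.sqrt (d i))⁻¹ • LinearMap.proj i
  have hD : ∀ i, D (simpleRoot i) = (Real.sqrt (d i))⁻¹ • simpleRoot i := by
    intro i
    ext j
    by_cases hij : j = i
    · subst hij; simp [D, simpleRoot]
    · simp [D, simpleRoot, hij]
  have hAD : A.compl₁₂ D D = tits M := by
    refine ext_simpleRoot fun i j => ?_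
    rw [LinearMap.compl₁₂_apply, hD, hD]
    simp only [map_smul, LinearMap.smul_apply, smul_eq_mul]
    have e1 := hrel i (simpleRoot j)
    have e2 := hrel j (simpleRoot i)
    rw [hsymm, tits_symm] at e2
    have hq : ∀ i, Real.sqrt (d i) ≠ 0 := fun i => (Real.sqrt_pos.2 (hdpos i)).ne'
    by_cases h0 : tits M (simpleRoot i) (simpleRoot j) = 0
    · rw [e1, h0]; simp
    · have hdd : d i = d j := mul_left_cancel₀ h0 (e1.symm.trans e2)
      rw [e1, ← hdd]
      have := Real.mul_self_sqrt (hdpos i).le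
      change _ * (_ * (_ * d i)) = _
      field_simp [hq i]
      rw [sq, this]
  rw [← hAD, LinearMap.compl₁₂_apply]
  refine hpos _ fun h => hx ?_
  ext i
  have := congrFun h i
  simpa [D, (Real.sqrt_pos.2 (hdpos i)).ne'] using this

theorem two_le_of_ne [Finite W] (cs : CoxeterSystem M W) {i j : B} (hij : i ≠ j) :
    2 ≤ M i j := by
  have h1 := M.off_diagonal i j hij
  have h0 : M i j ≠ 0 := by
    intro h0
    have hne : simpleRoot i + simpleRoot j ≠ (0 : B → ℝ) := by
      intro h
      have := congrFun h i
      simp [simpleRoot, hij] at this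
    have := tits_pos cs _ hne
    simp only [map_add, LinearMap.add_apply, tits_simple_self, tits_symm (simpleRoot j)
      (simpleRoot i)] at this
    rw [tits_simple, h0] at this
    norm_num at this
  omega

/-- A vector with nonnegative coordinates in the basis of simple roots. -/
def NonnegVec (x : B → ℝ) : Prop := ∀ i, 0 ≤ x i

theorem geomRep_alternating (cs : CoxeterSystem M W) (i j : B) (k : ℕ) :
    Real.sin (Real.pi / M i j) • geomRep cs (cs.wordProd (CoxeterSystem.alternatingWord i j k))
      (simpleRoot i) =
    if Even k then
      Real.sin (k * (Real.pi / M i j) + Real.pi / M i j) • simpleRoot i +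
        Real.sin (k * (Real.pi / M i j)) • simpleRoot j
    else
      Real.sin (k * (Real.pi / M i j) + Real.pi / M i j) • simpleRoot j +
        Real.sin (k * (Real.pi / M i j)) • simpleRoot i := by
  induction k with
  | zero => simp [CoxeterSystem.alternatingWord]
  | succ k ih =>
    rw [CoxeterSystem.alternatingWord_succ', cs.wordProd_cons, map_mul, Module.End.mul_apply,
      ← map_smul, ih]
    have e : ((k + 1 : ℕ) : ℝ) * (Real.pi / M i j) = k * (Real.pi / M i j) + Real.pi / M i j := by
      push_cast; ring
    have e' : ((k + 1 : ℕ) : ℝ) * (Real.pi / M i j) + Real.pi / M i j =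
        k * (Real.pi / M i j) + 2 * (Real.pi / M i j) := by
      push_cast; ring
    by_cases hk : Even k
    · have hk' : ¬ Even (k + 1) := by simpa [Nat.even_add_one] using hk
      have hji : tits M (simpleRoot j) (simpleRoot i) = -Real.cos (Real.pi / M i j) :=
        (tits_symm _ _).trans (tits_simple i j)
      rw [if_pos hk, if_neg hk', if_pos hk, geomRep_simple,
        refl_comb tits_symm (tits_simple_self j) hji, e', e, add_comm]
    · have hk' : Even (k + 1) := by simpa [Nat.even_add_one] using hk
      rw [if_neg hk, if_pos hk', if_neg hk, geomRep_simple,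
        refl_comb tits_symm (tits_simple_self i) (tits_simple i j), e', e, add_comm]

theorem geomRep_alternating_nonneg [Finite W] (cs : CoxeterSystem M W) {i j : B} (hij : i ≠ j)
    {k : ℕ} (hk : k < M i j) : ∃ p q : ℝ, 0 ≤ p ∧ 0 ≤ q ∧
      geomRep cs (cs.wordProd (CoxeterSystem.alternatingWord i j k)) (simpleRoot i) =
        p • simpleRoot i + q • simpleRoot j := by
  have h2 := two_le_of_ne cs hij
  have h2' : (2 : ℝ) ≤ M i j := by exact_mod_cast h2
  have hm : (0 : ℝ) < M i j := by linarith
  have hs : 0 < Real.sin (Real.pi / M i j) := Real.sin_pos_of_pos_of_lt_pi (by positivity)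
    (div_lt_self Real.pi_pos (by linarith))
  have hk' : (k : ℝ) + 1 ≤ M i j := by exact_mod_cast hk
  have hb : (k : ℝ) * (Real.pi / M i j) + Real.pi / M i j ≤ Real.pi := by
    have : (k : ℝ) * (Real.pi / M i j) + Real.pi / M i j = ((k : ℝ) + 1) * Real.pi / M i j := by ring
    rw [this, div_le_iff₀ hm, mul_comm]
    exact mul_le_mul_of_nonneg_left hk' Real.pi_pos.le
  have n0 : (0 : ℝ) ≤ Real.pi / M i j := by positivity
  have n1 : 0 ≤ Real.sin (k * (Real.pi / M i j) + Real.pi / M i j) :=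
    Real.sin_nonneg_of_nonneg_of_le_pi (by positivity) hb
  have n2 : 0 ≤ Real.sin (k * (Real.pi / M i j)) :=
    Real.sin_nonneg_of_nonneg_of_le_pi (by positivity) (by linarith)
  have h := geomRep_alternating cs i j k
  have h' : geomRep cs (cs.wordProd (CoxeterSystem.alternatingWord i j k)) (simpleRoot i) =
      (Real.sin (Real.pi / M i j))⁻¹ • (Real.sin (Real.pi / M i j) •
        geomRep cs (cs.wordProd (CoxeterSystem.alternatingWord i j k)) (simpleRoot i)) := by
    rw [inv_smul_smul₀ hs.ne']
  rw [h'] 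
  rw [h]
  split_ifs
  · exact ⟨_, _, mul_nonneg (inv_nonneg.2 hs.le) n1, mul_nonneg (inv_nonneg.2 hs.le) n2, by
      rw [smul_add, smul_smul, smul_smul]⟩
  · exact ⟨_, _, mul_nonneg (inv_nonneg.2 hs.le) n2, mul_nonneg (inv_nonneg.2 hs.le) n1, by
      rw [smul_add, smul_smul, smul_smul, add_comm]⟩

theorem alternating_mul_simple (cs : CoxeterSystem M W) {i j : B} (hm : M i j ≠ 0) {k : ℕ}
    (hk : M i j ≤ k) : ∃ ω : List B, ω.length + 1 = k ∧
      cs.wordProd (CoxeterSystem.alternatingWord i j k) * cs.simple i = cs.wordProd ω := by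
  induction k, hk using Nat.le_induction with
  | base =>
    obtain ⟨n, hn⟩ := Nat.exists_eq_succ_of_ne_zero hm
    refine ⟨CoxeterSystem.alternatingWord i j n, by
      rw [CoxeterSystem.length_alternatingWord, hn], ?_⟩
    have h := cs.wordProd_braidWord_eq i j
    rw [CoxeterSystem.braidWord, CoxeterSystem.braidWord, M.symmetric j i] at h
    rw [h, hn, CoxeterSystem.alternatingWord_succ, cs.wordProd_concat,
      cs.simple_mul_simple_cancel_right]
  | succ k hk ih =>
    obtain ⟨ω, h1, h2⟩ := ih
    rw [CoxeterSystem.alternatingWord_succ', cs.wordProd_cons, mul_assoc, h2, ← cs.wordProd_cons]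
    exact ⟨_, by simp [h1], rfl⟩

/-- If `w` is shorter than `w s`, then `w` maps the simple root of `s` to a positive vector.
One factors `w = w' u` with `u` of maximal length in the dihedral subgroup of `s` and of a
descent `t` of `w`, and computes in rank two. -/
theorem geomRep_nonneg [Finite W] (cs : CoxeterSystem M W) (n : ℕ) : ∀ (w : W) (i : B),
    cs.length w = n → cs.length w < cs.length (w * cs.simple i) →
      NonnegVec (geomRep cs w (simpleRoot i)) := by
  induction n using Nat.strong_induction_on with
  | _ n ih =>
  intro w i hn hi
  by_cases hw : w = 1
  · subst hw
    intro j
    simp only [map_one, Module.End.one_apply, simpleRoot, Pi.single_apply]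
    split_ifs <;> simp
  obtain ⟨j, hj⟩ := cs.exists_rightDescent_of_ne_one hw
  have hij : i ≠ j := by rintro rfl; exact absurd hj (not_lt.2 hi.le)
  let P : ℕ → Prop := fun k => ∃ w', w = w' * cs.wordProd (CoxeterSystem.alternatingWord i j k) ∧
    cs.length w = cs.length w' + k
  have hP1 : P 1 := by
    refine ⟨w * cs.simple j, ?_, (cs.isRightDescent_iff.1 hj).symm⟩
    simp [CoxeterSystem.alternatingWord]
  obtain ⟨k, ⟨w', hw', hlen⟩, hmax⟩ : ∃ k, P (k + 1) ∧ ¬ P (k + 2) := by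
    by_contra! hcon
    have hall : ∀ k, P (k + 1) := by
      intro k
      induction k with
      | zero => exact hP1
      | succ k ihk => exact hcon k ihk
    obtain ⟨w', -, h⟩ := hall (cs.length w)
    omega
  have hM := two_le_of_ne cs hij
  have hkm : k + 1 < M i j := by
    by_contra! hge
    obtain ⟨ω, h1, h2⟩ := alternating_mul_simple cs (by omega) hge
    have h3 := cs.length_mul_le w' (cs.wordProd ω)
    have h4 := cs.length_wordProd_le ω
    rw [hw', mul_assoc, h2, ← hw'] at hi
    omega
  -- both `i` and `j` are ascents of `w'`
  have asc1 : cs.length w' < cs.length (w' * cs.simple (if Even (k + 1) then j else i)) := by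
    rcases cs.length_mul_simple w' (if Even (k + 1) then j else i) with h | h
    · omega
    · refine absurd ⟨w' * cs.simple (if Even (k + 1) then j else i), ?_, ?_⟩ hmax
      · rw [CoxeterSystem.alternatingWord_succ', cs.wordProd_cons, mul_assoc,
          cs.simple_mul_simple_cancel_left, hw']
      · omega
  have asc2 : cs.length w' < cs.length (w' * cs.simple (if Even k then j else i)) := by
    have h := cs.length_mul_le (w' * cs.simple (if Even k then j else i))
      (cs.wordProd (CoxeterSystem.alternatingWord i j k))
    have h' := cs.length_wordProd_le (CoxeterSystem.alternatingWord i j k)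
    rw [CoxeterSystem.length_alternatingWord] at h'
    rw [mul_assoc, ← cs.wordProd_cons, ← CoxeterSystem.alternatingWord_succ', ← hw'] at h
    omega
  have asc : cs.length w' < cs.length (w' * cs.simple i) ∧
      cs.length w' < cs.length (w' * cs.simple j) := by
    by_cases hk : Even k
    · have hk' : ¬ Even (k + 1) := by simpa [Nat.even_add_one] using hk
      rw [if_neg hk'] at asc1
      rw [if_pos hk] at asc2
      exact ⟨asc1, asc2⟩
    · have hk' : Even (k + 1) := by simpa [Nat.even_add_one] using hk
      rw [if_pos hk'] at asc1
      rw [if_neg hk] at asc2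
      exact ⟨asc2, asc1⟩
  have ni := ih (cs.length w') (by omega) w' i rfl asc.1
  have nj := ih (cs.length w') (by omega) w' j rfl asc.2
  obtain ⟨p, q, hp, hq, h⟩ := geomRep_alternating_nonneg cs hij hkm
  rw [hw', map_mul, Module.End.mul_apply, h, map_add, map_smul, map_smul]
  intro s
  have := ni s
  have := nj s
  simp only [Pi.add_apply, Pi.smul_apply, smul_eq_mul]
  positivity

theorem geomRep_sign [Finite W] (cs : CoxeterSystem M W) (w : W) (i : B) :
    NonnegVec (geomRep cs w (simpleRoot i)) ∨ NonnegVec (-geomRep cs w (simpleRoot i)) := by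
  rcases cs.length_mul_simple w i with h | h
  · exact Or.inl (geomRep_nonneg cs _ w i rfl (by omega))
  · right
    have := geomRep_nonneg cs _ (w * cs.simple i) i rfl (by
      rw [cs.simple_mul_simple_cancel_right]; omega)
    rwa [map_mul, Module.End.mul_apply, geomRep_simple, refl_self (tits_simple_self i),
      map_neg] at this

theorem geomRep_injective [Finite W] (cs : CoxeterSystem M W) :
    Function.Injective (geomRep cs) := by
  rw [injective_iff_map_eq_one]
  intro w hw
  by_contra hne
  obtain ⟨i, hi⟩ := cs.exists_rightDescent_of_ne_one hne
  have := geomRep_nonneg cs _ (w * cs.simple i) i rfl (by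
    rw [cs.simple_mul_simple_cancel_right]; exact hi) i
  rw [map_mul, Module.End.mul_apply, geomRep_simple, refl_self (tits_simple_self i), hw] at this
  simp [simpleRoot] at this
  linarith

/-! ### The form attached to a Coxeter element -/

theorem toLinearMap₂'_simple (f : B → B → ℝ) (i j : B) :
    Matrix.toLinearMap₂' ℝ (Matrix.of f) (simpleRoot i) (simpleRoot j) = f i j := by
  simp [simpleRoot, Matrix.toLinearMap₂'_apply, Pi.single_apply]

/-- The triangular form attached to an ordering `l` of the simple reflections; its
symmetrisation is twice the Tits form. -/
noncomputable def seifert (M : CoxeterMatrix B) (l : List B) :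
    (B → ℝ) →ₗ[ℝ] (B → ℝ) →ₗ[ℝ] ℝ :=
  Matrix.toLinearMap₂' ℝ (Matrix.of fun i j =>
    if i = j then (1 : ℝ) else if l.idxOf i < l.idxOf j then
      2 * -Real.cos (Real.pi / M i j) else 0)

theorem seifert_simple (l : List B) (i j : B) :
    seifert M l (simpleRoot i) (simpleRoot j) =
      if i = j then (1 : ℝ) else if l.idxOf i < l.idxOf j then
        2 * -Real.cos (Real.pi / M i j) else 0 :=
  toLinearMap₂'_simple _ i j

theorem seifert_add (l : List B) (hl : ∀ i, i ∈ l) (x y : B → ℝ) :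
    seifert M l x y + seifert M l y x = 2 * tits M x y := by
  have : seifert M l + (seifert M l).flip = (2 : ℝ) • tits M := ext_simpleRoot fun i j => by
    simp only [LinearMap.add_apply, LinearMap.flip_apply, LinearMap.smul_apply, smul_eq_mul,
      seifert_simple, tits_simple]
    by_cases hij : i = j
    · subst hij; simp; norm_num
    · have hne : l.idxOf i ≠ l.idxOf j := fun h => hij ((List.idxOf_inj (hl i)).1 h)
      rw [if_neg hij, if_neg (Ne.symm hij), M.symmetric j i]
      rcases lt_or_gt_of_ne hne with h | h
      · rw [if_pos h, if_neg (not_lt.2 h.le), add_zero]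
      · rw [if_neg (not_lt.2 h.le), if_pos h, zero_add]
  exact LinearMap.congr_fun₂ this x y

theorem cone_of_nonneg {l : List B} (hl : ∀ i, i ∈ l) {x : B → ℝ} (hx : NonnegVec x) :
    Cone (l.map simpleRoot) x := by
  have : x = ∑ i, x i • simpleRoot i := by
    ext j; simp [simpleRoot, Finset.sum_apply, Pi.single_apply]
  rw [this]
  exact Finset.sum_induction _ (Cone (l.map simpleRoot)) (fun _ _ => Cone.add) Cone.zero fun i _ =>
    (Cone.of_mem (List.mem_map_of_mem (hl i))).smul (hx i)

/-- A finite Coxeter group with Coxeter element `γ` acts faithfully on a real vector space with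
a form and a finite set of roots, such that `γ` acts as the product of a good list, and the
reflections of the group are exactly the reflections in the roots. -/
theorem exists_good [Finite W] (cs : CoxeterSystem M W) {γ v : W} {l : List B} (hnd : l.Nodup)
    (hall : ∀ i, i ∈ l) (hγ : γ = v * cs.wordProd l * v⁻¹) :
    ∃ (E : (B → ℝ) →ₗ[ℝ] (B → ℝ) →ₗ[ℝ] ℝ) (Φ : Set (B → ℝ)) (P : List (B → ℝ)),
      Roots E Φ ∧ Good E Φ P ∧ geomRep cs γ = prodR E P ∧
      (∀ t, cs.IsReflection t → ∃ a ∈ Φ, geomRep cs t = refl E a) ∧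
      (∀ a ∈ Φ, ∃ t, cs.IsReflection t ∧ geomRep cs t = refl E a) := by
  let E : (B → ℝ) →ₗ[ℝ] (B → ℝ) →ₗ[ℝ] ℝ :=
    (seifert M l).compl₁₂ (geomRep cs v⁻¹) (geomRep cs v⁻¹)
  let Φ : Set (B → ℝ) := Set.range fun p : W × B => geomRep cs p.1 (simpleRoot p.2)
  let P : List (B → ℝ) := l.map fun i => geomRep cs v (simpleRoot i)
  have hE : ∀ x y, E x y + E y x = 2 * tits M x y := by
    intro x y
    simp only [E, LinearMap.compl₁₂_apply, seifert_add l hall, tits_geomRep]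
  have hEx : ∀ x, E x x = tits M x x := fun x => by have := hE x x; linarith
  have hinv : ∀ x, geomRep cs v⁻¹ (geomRep cs v x) = x := fun x => by
    simp [← Module.End.mul_apply, ← map_mul]
  have hrefl : ∀ a, refl E a = refl (tits M) a := fun a => by
    refine LinearMap.ext fun x => ?_
    rw [refl_apply, refl_apply_symm tits_symm, hE]
  have r1 : ∀ t, cs.IsReflection t → ∃ a ∈ Φ, geomRep cs t = refl E a := by
    rintro t ⟨w, i, rfl⟩
    exact ⟨geomRep cs w (simpleRoot i), ⟨(w, i), rfl⟩, by rw [hrefl, geomRep_conj]⟩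
  have r2 : ∀ a ∈ Φ, ∃ t, cs.IsReflection t ∧ geomRep cs t = refl E a := by
    rintro _ ⟨⟨w, i⟩, rfl⟩
    exact ⟨_, ⟨w, i, rfl⟩, by rw [hrefl, geomRep_conj]⟩
  have hprod : ∀ L : List (B → ℝ), (∀ a ∈ L, a ∈ Φ) → ∃ w, geomRep cs w = prodR E L := by
    intro L
    induction L with
    | nil => exact fun _ => ⟨1, by simp [prodR]⟩
    | cons a L ih =>
      intro h
      obtain ⟨w, hw⟩ := ih fun b hb => h b (by simp [hb])
      obtain ⟨t, -, ht⟩ := r2 a (h a (by simp))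
      exact ⟨t * w, by rw [map_mul, hw, ht, prodR_cons]⟩
  have H : Roots E Φ := by
    refine ⟨fun x hx => by rw [hEx]; exact tits_pos cs x hx, Set.finite_range _, ?_, ?_, ?_⟩
    · rintro _ ⟨⟨w, i⟩, rfl⟩
      rw [hEx, tits_geomRep, tits_simple_self]
    · rintro a ha _ ⟨⟨w, i⟩, rfl⟩
      obtain ⟨t, -, ht⟩ := r2 a ha
      exact ⟨(t * w, i), by simp only [map_mul, Module.End.mul_apply, ht]⟩
    · intro L hL
      obtain ⟨w, hw⟩ := hprod L hL
      exact ⟨orderOf w, orderOf_pos w, by rw [← hw, ← map_pow, pow_orderOf_eq_one, map_one]⟩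
  have hPmap : P = (l.map simpleRoot).map (geomRep cs v) := by simp [P]
  have hcone : ∀ {x}, NonnegVec (geomRep cs v⁻¹ x) → Cone P x := by
    intro x hx
    have := (cone_of_nonneg hall hx).map (geomRep cs v)
    rwa [geomRep_inv_apply, ← hPmap] at this
  refine ⟨E, Φ, P, H, ⟨?_, ?_, ?_⟩, ?_, r1, r2⟩
  · intro a ha
    obtain ⟨i, -, rfl⟩ := List.mem_map.1 ha
    exact ⟨(v, i), rfl⟩
  · rw [Tri, List.pairwise_map, List.pairwise_iff_getElem]
    intro a b ha hb hab
    simp only [E, LinearMap.compl₁₂_apply, hinv, seifert_simple, hnd.idxOf_getElem]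
    rw [if_neg (fun h => hab.ne' ((hnd.getElem_inj_iff).1 h)), if_neg (not_lt.2 hab.le)]
  · rintro _ ⟨⟨w, i⟩, rfl⟩ -
    have := geomRep_sign cs (v⁻¹ * w) i
    rw [map_mul, Module.End.mul_apply, ← map_neg] at this
    exact this.imp hcone hcone
  · subst hγ
    have key : ∀ l : List B, geomRep cs (v * cs.wordProd l * v⁻¹) =
        prodR E (l.map fun i => geomRep cs v (simpleRoot i)) := by
      intro l
      induction l with
      | nil => simp [prodR]
      | cons i l ih =>
        rw [List.map_cons, prodR_cons, ← ih, hrefl, ← geomRep_conj, ← map_mul, cs.wordProd_cons]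
        congr 1; group
    exact key l

end Tits

/-! ### Reflection length and the reflection order -/

section Order

variable (cs : CoxeterSystem M W)

theorem rlen_prod_le {l : List W} (hl : ∀ t ∈ l, cs.IsReflection t) :
    rlen cs l.prod ≤ l.length := Nat.sInf_le ⟨l, hl, rfl, rfl⟩

theorem exists_rlen (w : W) :
    ∃ l : List W, (∀ t ∈ l, cs.IsReflection t) ∧ l.length = rlen cs w ∧ l.prod = w := by
  have : {k | ∃ l : List W, (∀ t ∈ l, cs.IsReflection t) ∧ l.length = k ∧ l.prod = w}.Nonempty := by
    obtain ⟨ω, rfl⟩ := cs.wordProd_surjective w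
    refine ⟨_, ω.map cs.simple, ?_, rfl, rfl⟩
    intro t ht
    obtain ⟨i, -, rfl⟩ := List.mem_map.1 ht
    exact cs.isReflection_simple i
  exact Nat.sInf_mem this

theorem rlen_one : rlen cs 1 = 0 :=
  Nat.le_zero.1 (rlen_prod_le cs (l := []) (by simp))

theorem eq_one_of_rlen {w : W} (h : rlen cs w = 0) : w = 1 := by
  obtain ⟨l, -, hlen, rfl⟩ := exists_rlen cs w
  rw [h, List.length_eq_zero_iff] at hlen
  simp [hlen]

theorem rlen_mul_le (a b : W) : rlen cs (a * b) ≤ rlen cs a + rlen cs b := by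
  obtain ⟨l, hl, hla, ha⟩ := exists_rlen cs a
  obtain ⟨k, hk, hkb, hb⟩ := exists_rlen cs b
  have := rlen_prod_le cs (l := l ++ k) (by
    intro t ht
    rcases List.mem_append.1 ht with h | h
    exacts [hl t h, hk t h])
  rwa [List.prod_append, List.length_append, ha, hb, hla, hkb] at this

theorem rlen_inv_le (a : W) : rlen cs a⁻¹ ≤ rlen cs a := by
  obtain ⟨l, hl, hla, ha⟩ := exists_rlen cs a
  have := rlen_prod_le cs (l := (l.map (·⁻¹)).reverse) (by
    intro t ht
    obtain ⟨s, hs, rfl⟩ := List.mem_map.1 (List.mem_reverse.1 ht)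
    have hs' := hl s hs
    rwa [hs'.inv])
  rwa [← List.prod_inv_reverse, ha, List.length_reverse, List.length_map, hla] at this

theorem rlen_inv (a : W) : rlen cs a⁻¹ = rlen cs a :=
  (rlen_inv_le cs a).antisymm (by simpa using rlen_inv_le cs a⁻¹)

theorem rlen_conj_le (w a : W) : rlen cs (w * a * w⁻¹) ≤ rlen cs a := by
  obtain ⟨l, hl, hla, ha⟩ := exists_rlen cs a
  have := rlen_prod_le cs (l := l.map (MulAut.conj w)) (by
    intro t ht
    obtain ⟨s, hs, rfl⟩ := List.mem_map.1 ht
    exact (hl s hs).conj w)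
  rwa [List.prod_hom, ha, List.length_map, hla, MulAut.conj_apply] at this

theorem rlen_conj (w a : W) : rlen cs (w * a * w⁻¹) = rlen cs a := by
  refine (rlen_conj_le cs w a).antisymm ?_
  have := rlen_conj_le cs w⁻¹ (w * a * w⁻¹)
  rwa [show w⁻¹ * (w * a * w⁻¹) * w⁻¹⁻¹ = a by group] at this

theorem rlen_mul_comm (a b : W) : rlen cs (a * b) = rlen cs (b * a) := by
  rw [← rlen_conj cs a (b * a)]; congr 1; group

variable {cs}

theorem rle_refl (a : W) : rle cs a a := by simp [rle, rlen_one]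

theorem one_rle (a : W) : rle cs 1 a := by simp [rle, rlen_one]

theorem rle_of_le {a b : W} (h : rlen cs a + rlen cs (a⁻¹ * b) ≤ rlen cs b) : rle cs a b := by
  have := rlen_mul_le cs a (a⁻¹ * b)
  rw [mul_inv_cancel_left] at this
  exact le_antisymm this h

theorem rle_trans {a b c : W} (h : rle cs a b) (h' : rle cs b c) : rle cs a c := by
  apply rle_of_le
  have := rlen_mul_le cs (a⁻¹ * b) (b⁻¹ * c)
  rw [show a⁻¹ * b * (b⁻¹ * c) = a⁻¹ * c by group] at this
  unfold rle at h h'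
  omega

theorem rle_antisymm {a b : W} (h : rle cs a b) (h' : rle cs b a) : a = b := by
  unfold rle at h h'
  have : a⁻¹ * b = 1 := eq_one_of_rlen cs (by omega)
  rw [← mul_one a, ← this, mul_inv_cancel_left]

/-- Left translation by `a⁻¹` preserves the order on the elements above `a`. -/
theorem rle_quot {a b c : W} (h : rle cs a b) (h' : rle cs b c) :
    rle cs (a⁻¹ * b) (a⁻¹ * c) := by
  have h3 := rle_trans h h'
  unfold rle at h h' h3 ⊢
  rw [show (a⁻¹ * b)⁻¹ * (a⁻¹ * c) = b⁻¹ * c by group]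
  omega

/-- Left factors of a minimal factorisation are also right factors, the length being invariant
under conjugation. -/
theorem rle_compl {a b : W} (h : rle cs a b) : rle cs (a⁻¹ * b) b := by
  unfold rle at h ⊢
  have : (a⁻¹ * b)⁻¹ * b = b⁻¹ * (a * b) := by group
  rw [this, rlen_mul_comm cs b⁻¹, mul_inv_cancel_right]
  omega

theorem rle_shift {s x c : W} (h : rle cs s c) (h' : rle cs x (s⁻¹ * c)) : rle cs (s * x) c := by
  apply rle_of_le
  have := rlen_mul_le cs s x
  unfold rle at h h'
  rw [show (s * x)⁻¹ * c = x⁻¹ * (s⁻¹ * c) by group]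
  omega

theorem rle_mul_right {s x c : W} (h : rle cs s c) (h' : rle cs x (s⁻¹ * c)) :
    rle cs s (s * x) := by
  apply rle_of_le
  have h2 := rlen_mul_le cs (s * x) ((s * x)⁻¹ * c)
  unfold rle at h h'
  rw [mul_inv_cancel_left, show (s * x)⁻¹ * c = x⁻¹ * (s⁻¹ * c) by group] at h2
  rw [inv_mul_cancel_left]
  omega

theorem rle_mul_left {t x y : W} (h : rle cs t (t * y)) (h' : rle cs x y) :
    rle cs (t * x) (t * y) :=
  rle_shift h (by rwa [inv_mul_cancel_left])

end Order

/-! ### The interval below a Coxeter element has meets -/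

section Meet

variable [Fintype B] [DecidableEq B] {cs : CoxeterSystem M W}
  {E : (B → ℝ) →ₗ[ℝ] (B → ℝ) →ₗ[ℝ] ℝ} {Φ : Set (B → ℝ)}

theorem exists_roots_of_refls
    (h : ∀ t, cs.IsReflection t → ∃ a ∈ Φ, geomRep cs t = refl E a) :
    ∀ l : List W, (∀ t ∈ l, cs.IsReflection t) →
      ∃ ψ : List (B → ℝ), (∀ a ∈ ψ, a ∈ Φ) ∧ geomRep cs l.prod = prodR E ψ ∧
        ψ.length = l.length
  | [], _ => ⟨[], by simp, by simp [prodR], rfl⟩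
  | t :: l, hl => by
    obtain ⟨ψ, hψ, hp, hlen⟩ := exists_roots_of_refls h l fun s hs => hl s (by simp [hs])
    obtain ⟨a, ha, hta⟩ := h t (hl t (by simp))
    refine ⟨a :: ψ, ?_, ?_, by simp [hlen]⟩
    · simpa using ⟨ha, hψ⟩
    · rw [List.prod_cons, map_mul, hta, hp, prodR_cons]

theorem exists_refls_of_roots
    (h : ∀ a ∈ Φ, ∃ t, cs.IsReflection t ∧ geomRep cs t = refl E a) :
    ∀ ψ : List (B → ℝ), (∀ a ∈ ψ, a ∈ Φ) →
      ∃ l : List W, (∀ t ∈ l, cs.IsReflection t) ∧ geomRep cs l.prod = prodR E ψ ∧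
        l.length = ψ.length
  | [], _ => ⟨[], by simp, by simp [prodR], rfl⟩
  | a :: ψ, hψ => by
    obtain ⟨l, hl, hp, hlen⟩ := exists_refls_of_roots h ψ fun s hs => hψ s (by simp [hs])
    obtain ⟨t, ht, hta⟩ := h a (hψ a (by simp))
    refine ⟨t :: l, ?_, ?_, by simp [hlen]⟩
    · simpa using ⟨ht, hl⟩
    · rw [List.prod_cons, map_mul, hta, hp, prodR_cons]

/-- A triangular list of roots gives a shortest factorisation into reflections. -/
theorem rlen_eq_of_tri [Finite W] (H : Roots E Φ)
    (h : ∀ t, cs.IsReflection t → ∃ a ∈ Φ, geomRep cs t = refl E a)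
    (h' : ∀ a ∈ Φ, ∃ t, cs.IsReflection t ∧ geomRep cs t = refl E a)
    {w : W} {τ : List (B → ℝ)} (hτ : ∀ a ∈ τ, a ∈ Φ) (ht : Tri E τ)
    (hw : geomRep cs w = prodR E τ) : rlen cs w = τ.length := by
  obtain ⟨l, hl, hp, hlen⟩ := exists_refls_of_roots h' τ hτ
  obtain rfl : l.prod = w := geomRep_injective cs (hp.trans hw.symm)
  have h1 := rlen_prod_le cs hl
  obtain ⟨k, hk, hkl, hkw⟩ := exists_rlen cs l.prod
  obtain ⟨ψ, hψ, hψp, hψl⟩ := exists_roots_of_refls h k hk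
  have := (sp_eq_of_prodR_eq H (fun a ha => H.one a (hτ a ha)) ht
    (hw.symm.trans (hkw ▸ hψp)) (by omega)).2
  omega

/-- The elements of the interval below a Coxeter element are represented by good lists; the
order becomes inclusion of spans, and `Good.meet` supplies the meets. -/
theorem exists_meet [Finite W] {γ : W} (hγ : IsCoxeterElement cs γ) {u v : W}
    (hu : rle cs u γ) (hv : rle cs v γ) :
    ∃ h, rle cs h u ∧ rle cs h v ∧ ∀ z, rle cs z u → rle cs z v → rle cs z h := by
  obtain ⟨x, l, hnd, hall, hx⟩ := hγ
  obtain ⟨E, Φ, P, H, hP, hγP, h, h'⟩ := exists_good cs hnd hall hx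
  have hlenP := rlen_eq_of_tri H h h' hP.mem hP.tri hγP
  have inj := geomRep_injective cs
  -- Every element of the interval has a good list.
  have good : ∀ w, rle cs w γ → ∃ l, Good E Φ l ∧ Compat Φ P l ∧ l.length = rlen cs w ∧
      geomRep cs w = prodR E l := by
    intro w hw
    obtain ⟨l₁, hl₁, hlen₁, hw₁⟩ := exists_rlen cs w
    obtain ⟨l₂, hl₂, hlen₂, hw₂⟩ := exists_rlen cs (w⁻¹ * γ)
    obtain ⟨ψ, hψ, hψp, hψl⟩ := exists_roots_of_refls h l₁ hl₁
    obtain ⟨τ, hτ, hτp, hτl⟩ := exists_roots_of_refls h l₂ hl₂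
    rw [hw₁] at hψp
    rw [hw₂] at hτp
    unfold rle at hw
    obtain ⟨k, hk, hc, hkl, hkp⟩ := hP.left_factor H hτ (ψ := ψ)
      (by rw [← hγP, ← hψp, ← hτp, ← map_mul, mul_inv_cancel_left]) (by omega)
    exact ⟨k, hk, hc, by omega, by rw [hkp, hψp]⟩
  -- Inclusion of spans gives the order.
  have le_of : ∀ {z w : W} {τ l : List (B → ℝ)}, (∀ a ∈ τ, a ∈ Φ) → Tri E τ →
      geomRep cs z = prodR E τ → Good E Φ l → geomRep cs w = prodR E l →
      (∀ a ∈ τ, a ∈ sp l) → rle cs z w := by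
    intro z w τ l hτ ht hz hl hw hs
    obtain ⟨k, hk, -, hlen, hp⟩ := hl.strip H ht hτ hs
    obtain ⟨L, -, hLp, -⟩ := exists_refls_of_roots h' k hk.mem
    have e1 := rlen_eq_of_tri H h h' hτ ht hz
    have e2 := rlen_eq_of_tri H h h' hl.mem hl.tri hw
    have e3 := rlen_eq_of_tri H h h' hk.mem hk.tri hLp
    have e4 : w = L.prod * z := inj (by rw [map_mul, hLp, hz, hw, hp])
    unfold rle
    have e5 : rlen cs (z⁻¹ * w) = rlen cs L.prod := by
      rw [rlen_mul_comm, e4, mul_inv_cancel_right]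
    omega
  -- The order gives inclusion of spans.
  have sub_of : ∀ {z w : W} {l₁ l : List (B → ℝ)}, rle cs z w → geomRep cs z = prodR E l₁ →
      l₁.length = rlen cs z → Good E Φ l → geomRep cs w = prodR E l → sp l₁ ≤ sp l := by
    intro z w l₁ l hzw hz hlen hl hw
    obtain ⟨l₂, hl₂, hlen₂, hw₂⟩ := exists_rlen cs (z⁻¹ * w)
    obtain ⟨τ, hτ, hτp, hτl⟩ := exists_roots_of_refls h l₂ hl₂
    have e := rlen_eq_of_tri H h h' hl.mem hl.tri hw
    unfold rle at hzw
    have := (sp_eq_of_prodR_eq H (hl.one H) hl.tri (ψ := l₁ ++ τ)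
      (by rw [prodR_append, ← hz, ← hτp, hw₂, ← map_mul, mul_inv_cancel_left, hw])
      (by rw [List.length_append]; omega)).1
    rw [← this]
    exact sp_mono fun a ha => by simp [ha]
  obtain ⟨lu, hlu, hcu, hlenu, hpu⟩ := good u hu
  obtain ⟨lv, hlv, hcv, hlenv, hpv⟩ := good v hv
  obtain ⟨τ, ht, hτ, hmax⟩ := Good.meet H hP hlu hlv hcu hcv
  obtain ⟨L, hL, hLp, hLl⟩ := exists_refls_of_roots h' τ fun a ha => (hτ a ha).1
  have hLu : rle cs L.prod u :=
    le_of (fun a ha => (hτ a ha).1) ht hLp hlu hpu fun a ha => (hτ a ha).2.1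
  have hLv : rle cs L.prod v :=
    le_of (fun a ha => (hτ a ha).1) ht hLp hlv hpv fun a ha => (hτ a ha).2.2
  refine ⟨L.prod, hLu, hLv, fun z hzu hzv => ?_⟩
  obtain ⟨lz, hlz, -, hlenz, hpz⟩ := good z (rle_trans hzu hu)
  obtain ⟨lh, hlh, -, hlenh, hph⟩ := good L.prod (rle_trans hLu hu)
  have hsp : sp τ = sp lh := (sp_eq_of_prodR_eq H (hlh.one H) hlh.tri
    (hph.symm.trans hLp) (by
      rw [hlenh, rlen_eq_of_tri H h h' (fun a ha => (hτ a ha).1) ht hLp])).1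
  refine le_of hlz.mem hlz.tri hpz hlh hph fun a ha => ?_
  rw [← hsp]
  exact hmax a (hlz.mem a ha) (sub_of hzu hpz hlenz hlu hpu (mem_sp ha))
    (sub_of hzv hpz hlenz hlv hpv (mem_sp ha))

end Meet

/-! ### Cancellation in the positive monoid -/

section Monoid

variable {cs : CoxeterSystem M W} {γ : W}

theorem pgen_one : pgen cs γ 1 = 1 := by simp [pgen]

theorem pgen_of (w : NCGen cs γ) : pgen cs γ w = PresentedMonoid.of (posRels cs γ) w := by
  rw [pgen, dif_pos w.2]

theorem pgen_mul {a b : W} (h : rle cs a b) (hb : rle cs b γ) :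
    pgen cs γ a * pgen cs γ (a⁻¹ * b) = pgen cs γ b := by
  by_cases ha1 : a = 1
  · simp [ha1, pgen_one]
  by_cases hab : a⁻¹ * b = 1
  · have : a = b := by rw [← mul_one a, ← hab, mul_inv_cancel_left]
    simp [this, pgen_one]
  have hb1 : b ≠ 1 := by
    rintro rfl
    unfold rle at h
    rw [rlen_one] at h
    exact ha1 (eq_one_of_rlen cs (by omega))
  have key : ∀ w₁ w₂ w₃ : NCGen cs γ, (w₁ : W) * w₂ = w₃ →
      rlen cs (w₁ : W) + rlen cs (w₂ : W) = rlen cs (w₃ : W) →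
      PresentedMonoid.of (posRels cs γ) w₁ * PresentedMonoid.of (posRels cs γ) w₂ =
        PresentedMonoid.of (posRels cs γ) w₃ := fun w₁ w₂ w₃ e e' =>
    (Con.eq _).2 (ConGen.Rel.of _ _ ⟨w₁, w₂, w₃, rfl, rfl, e, e'⟩)
  have := key ⟨a, ha1, rle_trans h hb⟩ ⟨a⁻¹ * b, hab, rle_trans (rle_compl h) hb⟩ ⟨b, hb1, hb⟩
    (mul_inv_cancel_left a b) h.symm
  rwa [← pgen_of, ← pgen_of, ← pgen_of] at this

/-- A meet operation on the interval `[1,γ]`. -/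
structure IsMeet (cs : CoxeterSystem M W) (γ : W) (m : W → W → W) : Prop where
  left : ∀ u v, rle cs u γ → rle cs v γ → rle cs (m u v) u
  right : ∀ u v, rle cs u γ → rle cs v γ → rle cs (m u v) v
  le : ∀ u v, rle cs u γ → rle cs v γ → ∀ z, rle cs z u → rle cs z v → rle cs z (m u v)

variable {m : W → W → W}

/-- The largest left factor `h` of `a` which `s` can absorb, i.e. such that `s h` is a product of
lengths `ℓ(s) + ℓ(h)` in `[1,γ]`. Here `m` is a meet operation. -/
def nfHead (γ : W) (m : W → W → W) (s a : W) : W := m a (s⁻¹ * γ)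

theorem nfHead_left (hm : IsMeet cs γ m) {s a : W} (hs : rle cs s γ) (ha : rle cs a γ) :
    rle cs (nfHead γ m s a) a := hm.left _ _ ha (rle_compl hs)

theorem nfHead_right (hm : IsMeet cs γ m) {s a : W} (hs : rle cs s γ) (ha : rle cs a γ) :
    rle cs (nfHead γ m s a) (s⁻¹ * γ) := hm.right _ _ ha (rle_compl hs)

theorem nfHead_mul_le (hm : IsMeet cs γ m) {s a : W} (hs : rle cs s γ) (ha : rle cs a γ) :
    rle cs (s * nfHead γ m s a) γ := rle_shift hs (nfHead_right hm hs ha)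

/-- Absorbing by `t` and then by `s` is the same as absorbing by `s t`, when the lengths of `s` and
`t` add up. -/
theorem nfHead_comp (hm : IsMeet cs γ m) {s t a : W} (hst : rle cs s (s * t))
    (hg : rle cs (s * t) γ) (ht : rle cs t γ) (ha : rle cs a γ) :
    nfHead γ m s (t * nfHead γ m t a) = t * nfHead γ m (s * t) a := by
  have hs := rle_trans hst hg
  have hb := nfHead_mul_le hm ht ha
  have htγ : rle cs t (s⁻¹ * γ) := by simpa using rle_quot hst hg
  have e : (s * t)⁻¹ * γ = t⁻¹ * (s⁻¹ * γ) := by group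
  have hr := nfHead_right hm hg ha
  rw [e] at hr
  have htb : rle cs t (t * nfHead γ m t a) := rle_mul_right ht (nfHead_right hm ht ha)
  apply rle_antisymm
  · have h2 : rle cs t (nfHead γ m s (t * nfHead γ m t a)) :=
      hm.le _ _ hb (rle_compl hs) _ htb htγ
    have h3 : rle cs (t⁻¹ * nfHead γ m s (t * nfHead γ m t a)) (nfHead γ m (s * t) a) := by
      refine hm.le _ _ ha (rle_compl hg) _ ?_ ?_
      · have := rle_quot h2 (nfHead_left hm hs hb)
        rw [inv_mul_cancel_left] at this
        exact rle_trans this (nfHead_left hm ht ha)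
      · rw [e]
        exact rle_quot h2 (nfHead_right hm hs hb)
    simpa using rle_mul_left (rle_mul_right htγ hr) h3
  · refine hm.le _ _ hb (rle_compl hs) _ ?_ (rle_shift htγ hr)
    refine rle_mul_left htb (hm.le _ _ ha (rle_compl ht) _ (nfHead_left hm hg ha) ?_)
    exact rle_trans hr (rle_quot htγ (rle_compl hs))

/-- The action of a generator on pairs `(a, X)`, to be thought of as the partially normalised
product `⟨a⟩X`: the head `a` absorbs as much as possible. -/
noncomputable def act (hm : IsMeet cs γ m) (s : NCGen cs γ) :
    Function.End ({a : W // rle cs a γ} × PosMonoid cs γ) := fun x =>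
  (⟨s * nfHead γ m s x.1, nfHead_mul_le hm s.2.2 x.1.2⟩,
    pgen cs γ ((nfHead γ m s x.1)⁻¹ * x.1) * x.2)

theorem act_mul (hm : IsMeet cs γ m) {s t w : NCGen cs γ} (h : (s : W) * t = w)
    (hl : rlen cs (s : W) + rlen cs (t : W) = rlen cs (w : W)) :
    act hm s * act hm t = act hm w := by
  funext x
  obtain ⟨⟨a, ha⟩, X⟩ := x
  have hst : rle cs (s : W) (s * t) := by rw [rle, inv_mul_cancel_left, h, hl]
  have hg : rle cs (s * t : W) γ := h ▸ w.2.2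
  have key := nfHead_comp hm hst hg t.2.2 ha
  rw [h] at key hst
  have hh : rle cs (nfHead γ m w a) (nfHead γ m t a) := by
    refine hm.le _ _ ha (rle_compl t.2.2) _ (nfHead_left hm w.2.2 ha) ?_
    refine rle_trans (nfHead_right hm w.2.2 ha) ?_
    have htγ : rle cs (t : W) ((s : W)⁻¹ * γ) := by
      simpa [← h] using rle_quot hst w.2.2
    have := rle_quot htγ (rle_compl s.2.2)
    rwa [show (t : W)⁻¹ * ((s : W)⁻¹ * γ) = (w : W)⁻¹ * γ by rw [← h]; group] at this
  have hta := nfHead_left hm t.2.2 ha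
  refine Prod.ext (Subtype.ext ?_) ?_
  · change (s : W) * nfHead γ m s (t * nfHead γ m t a) = w * nfHead γ m w a
    rw [key, ← mul_assoc, h]
  · change pgen cs γ ((nfHead γ m s (t * nfHead γ m t a))⁻¹ * (t * nfHead γ m t a)) *
      (pgen cs γ ((nfHead γ m t a)⁻¹ * a) * X) = pgen cs γ ((nfHead γ m w a)⁻¹ * a) * X
    rw [key, ← mul_assoc,
      ← pgen_mul (rle_quot hh hta) (rle_trans (rle_compl (rle_trans hh hta)) ha)]
    congr 3 <;> group

/-- The action `act` extended to the positive monoid. -/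
noncomputable def actHom (hm : IsMeet cs γ m) :
    PosMonoid cs γ →* Function.End ({a : W // rle cs a γ} × PosMonoid cs γ) :=
  PresentedMonoid.lift (act hm) (by
    rintro _ _ ⟨w₁, w₂, w₃, rfl, rfl, h, hl⟩
    simpa using act_mul hm h hl)

/-- Multiplying a pair out intertwines the action with left multiplication. -/
theorem eval_actHom (hm : IsMeet cs γ m) (A : PosMonoid cs γ) :
    ∀ x, pgen cs γ (actHom hm A x).1 * (actHom hm A x).2 = A * (pgen cs γ x.1 * x.2) := by
  have step : ∀ s x, pgen cs γ (act hm s x).1 * (act hm s x).2 =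
      PresentedMonoid.of (posRels cs γ) s * (pgen cs γ x.1 * x.2) := by
    rintro s ⟨⟨a, ha⟩, X⟩
    have h1 := nfHead_right hm s.2.2 ha
    have h2 := pgen_mul (rle_mul_right s.2.2 h1) (rle_shift s.2.2 h1)
    rw [inv_mul_cancel_left, pgen_of] at h2
    have h3 := pgen_mul (nfHead_left hm s.2.2 ha) ha
    change pgen cs γ (s * nfHead γ m s a) * (pgen cs γ ((nfHead γ m s a)⁻¹ * a) * X) = _
    rw [← h2, ← h3]
    simp only [mul_assoc]
  induction A using PresentedMonoid.inductionOn with | h A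
  induction A using FreeMonoid.inductionOn with
  | one =>
    intro x
    rw [map_one, map_one, one_mul]
    rfl
  | of s => exact step s
  | mul A C hA hC =>
    intro x
    rw [map_mul, map_mul, mul_assoc, ← hC, ← hA]
    rfl

/-- The head of `⟨s⟩A` is `s` times the part `h` of the head `a` of `A` absorbed by `s`, and the
remainder is `⟨h⁻¹a⟩` times the remainder of `A`. Hence `⟨s⟩A` determines `h` and then `A`. -/
theorem left_cancel [Fintype B] [Finite W] (hγ : IsCoxeterElement cs γ) (s : NCGen cs γ)
    {A C : PosMonoid cs γ}
    (h : PresentedMonoid.of (posRels cs γ) s * A = PresentedMonoid.of (posRels cs γ) s * C) :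
    A = C := by
  classical
  have hex : ∀ u v : W, ∃ k, rle cs u γ → rle cs v γ →
      rle cs k u ∧ rle cs k v ∧ ∀ z, rle cs z u → rle cs z v → rle cs z k := by
    intro u v
    by_cases h : rle cs u γ ∧ rle cs v γ
    · obtain ⟨k, hk⟩ := exists_meet hγ h.1 h.2
      exact ⟨k, fun _ _ => hk⟩
    · exact ⟨1, fun h1 h2 => absurd ⟨h1, h2⟩ h⟩
  choose m hm' using hex
  have hm : IsMeet cs γ m :=
    ⟨fun u v h1 h2 => (hm' u v h1 h2).1, fun u v h1 h2 => (hm' u v h1 h2).2.1,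
      fun u v h1 h2 => (hm' u v h1 h2).2.2⟩
  let o : {a : W // rle cs a γ} × PosMonoid cs γ := (⟨1, one_rle γ⟩, 1)
  have hev : ∀ X, pgen cs γ (actHom hm X o).1 * (actHom hm X o).2 = X := fun X => by
    rw [eval_actHom]; simp [o, pgen_one]
  have hact : ∀ X, actHom hm (PresentedMonoid.of (posRels cs γ) s * X) o =
      act hm s (actHom hm X o) := fun X => by rw [map_mul]; rfl
  have e := congrArg (fun X => actHom hm X o) h
  simp only [hact] at e
  rw [← hev A, ← hev C]
  generalize actHom hm A o = x at e ⊢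
  generalize actHom hm C o = y at e ⊢
  obtain ⟨⟨a, ha⟩, X⟩ := x
  obtain ⟨⟨c, hc⟩, Y⟩ := y
  have e1 : (s : W) * nfHead γ m s a = s * nfHead γ m s c := congrArg (fun x => (x.1 : W)) e
  have e2 : pgen cs γ ((nfHead γ m s a)⁻¹ * a) * X = pgen cs γ ((nfHead γ m s c)⁻¹ * c) * Y :=
    congrArg Prod.snd e
  have h3 := pgen_mul (nfHead_left hm s.2.2 ha) ha
  have h4 := pgen_mul (nfHead_left hm s.2.2 hc) hc
  change pgen cs γ a * X = pgen cs γ c * Y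
  rw [← h3, ← h4, mul_assoc, mul_assoc, e2, mul_left_cancel e1]

theorem rle_inv {w : W} (h : rle cs w γ) : rle cs w⁻¹ γ⁻¹ := by
  unfold rle at h ⊢
  have : w⁻¹⁻¹ * γ⁻¹ = (γ * w⁻¹)⁻¹ := by group
  rw [this, rlen_inv, rlen_inv, rlen_inv, rlen_mul_comm, h]

theorem isCoxeterElement_inv [Fintype B] (hγ : IsCoxeterElement cs γ) :
    IsCoxeterElement cs γ⁻¹ := by
  obtain ⟨v, l, hnd, hall, rfl⟩ := hγ
  exact ⟨v, l.reverse, List.nodup_reverse.2 hnd, fun i => List.mem_reverse.2 (hall i), by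
    rw [cs.wordProd_reverse]; group⟩

/-- Inversion of generators. -/
def invGen {γ' : W} (hγ : γ⁻¹ = γ') (w : NCGen cs γ) : NCGen cs γ' :=
  ⟨(w : W)⁻¹, inv_ne_one.2 w.2.1, hγ ▸ rle_inv w.2.2⟩

/-- Inversion in `W` gives an anti-homomorphism between the positive monoids of `γ` and `γ⁻¹`. -/
def flipHom {γ' : W} (hγ : γ⁻¹ = γ') : PosMonoid cs γ →* (PosMonoid cs γ')ᵐᵒᵖ :=
  PresentedMonoid.lift
    (fun w => MulOpposite.op (PresentedMonoid.of (posRels cs γ') (invGen hγ w))) (by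
    rintro _ _ ⟨w₁, w₂, w₃, rfl, rfl, h, hl⟩
    simp only [map_mul, FreeMonoid.lift_eval_of, ← MulOpposite.op_mul]
    congr 1
    refine (Con.eq _).2 (ConGen.Rel.of _ _
      ⟨invGen hγ w₂, invGen hγ w₁, invGen hγ w₃, rfl, rfl, ?_, ?_⟩)
    · change (w₂ : W)⁻¹ * (w₁ : W)⁻¹ = (w₃ : W)⁻¹
      rw [← h, mul_inv_rev]
    · change rlen cs (w₂ : W)⁻¹ + rlen cs (w₁ : W)⁻¹ = rlen cs (w₃ : W)⁻¹
      rw [rlen_inv, rlen_inv, rlen_inv, ← hl, add_comm])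

theorem flipHom_flipHom {γ' : W} (hγ : γ⁻¹ = γ') (hγ' : γ'⁻¹ = γ) (A : PosMonoid cs γ) :
    (flipHom hγ' (flipHom hγ A).unop).unop = A := by
  induction A using PresentedMonoid.inductionOn with | h A
  induction A using FreeMonoid.inductionOn with
  | one => simp
  | of s =>
    change PresentedMonoid.of (posRels cs γ) (invGen hγ' (invGen hγ s)) =
      PresentedMonoid.of (posRels cs γ) s
    congr 1
    exact Subtype.ext (inv_inv _)
  | mul A C hA hC =>
    rw [map_mul, map_mul, MulOpposite.unop_mul, map_mul, MulOpposite.unop_mul, hA, hC]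

theorem right_cancel [Fintype B] [Finite W] (hγ : IsCoxeterElement cs γ) (s : NCGen cs γ)
    {A C : PosMonoid cs γ}
    (h : A * PresentedMonoid.of (posRels cs γ) s = C * PresentedMonoid.of (posRels cs γ) s) :
    A = C := by
  have e := congrArg (fun X => (flipHom (rfl : γ⁻¹ = γ⁻¹) X).unop) h
  simp only [map_mul, MulOpposite.unop_mul] at e
  have := left_cancel (isCoxeterElement_inv hγ) (invGen rfl s) e
  rw [← flipHom_flipHom (rfl : γ⁻¹ = γ⁻¹) (inv_inv γ) A, this, flipHom_flipHom]

end Monoid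

end DualBraid

/-- The positive monoid `Γ₊(W,γ)` has left and right cancellation. -/
theorem posMonoid_cancellation [Fintype B] [Fintype W] (cs : CoxeterSystem M W) (γ : W)
    (hγ : IsCoxeterElement cs γ) (u : W) (hu : u ≠ 1 ∧ rle cs u γ)
    (A C' : PosMonoid cs γ) :
    (PresentedMonoid.of (posRels cs γ) ⟨u, hu⟩ * A =
      PresentedMonoid.of (posRels cs γ) ⟨u, hu⟩ * C' → A = C') ∧
    (A * PresentedMonoid.of (posRels cs γ) ⟨u, hu⟩ =
      C' * PresentedMonoid.of (posRels cs γ) ⟨u, hu⟩ → A = C') := by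
  exact ⟨DualBraid.left_cancel hγ ⟨u, hu⟩, DualBraid.right_cancel hγ ⟨u, hu⟩⟩
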